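/- arXiv:2402.10199 — 2 statements merged into one kernel-verified Lean document; each statement's English description precedes it below -/
import Mathlib

section
/- Assume Setting (C) and let μ ∈ M(X, σ_X) be an invariant Gibbs measure for f. Suppose the 2×2 submatrix M_{22}|_{π^{-1}(22)} is not of the form [[0, a₁],[a₂, 0]] with a₁, a₂ > 0. Then: the sequence 𝓖 = {log g_n} is almost additive on Y if and only if there exists a continuous function ĝ on Y for which the push-forward measure πμ is the unique invariant Gibbs measure for ĝ; moreover, if 𝓖 is merely weakly almost additive on Y, then there exists a continuous function ĝ on Y for which πμ is the unique invariant weak Gibbs measure for ĝ. -/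
open MeasureTheory Filter Topology

noncomputable section

/-- The one-sided shift map. -/
def shift {A : Type*} : (ℕ → A) → ℕ → A := fun x i => x (i + 1)

/-- A finite word appears in some point of `X`. -/
def AppearsIn {A : Type*} (X : Set (ℕ → A)) (w : List A) : Prop :=
  ∃ x ∈ X, ∃ m : ℕ, ∀ i : Fin w.length, x (m + i) = w.get i

/-- `X` is a (one-sided) subshift: a closed, shift-invariant set. -/
def IsSubshift {A : Type*} [TopologicalSpace A] (X : Set (ℕ → A)) : Prop :=
  IsClosed X ∧ shift '' X ⊆ X

/-- The weak specification property. -/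
def WeakSpec {A : Type*} (X : Set (ℕ → A)) : Prop :=
  ∃ p : ℕ, ∀ u v : List A, AppearsIn X u → AppearsIn X v →
    ∃ w : List A, w.length ≤ p ∧ AppearsIn X (u ++ w ++ v)

/-- The cylinder set `[x_1 … x_n]` inside `X`. -/
def cyl {A : Type*} (X : Set (ℕ → A)) (x : ℕ → A) (n : ℕ) : Set (ℕ → A) :=
  {z ∈ X | ∀ i < n, z i = x i}

/-- Birkhoff sum `(S_n g)(x)`. -/
def birk {A : Type*} (g : (ℕ → A) → ℝ) (n : ℕ) (x : ℕ → A) : ℝ :=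
  ∑ i ∈ Finset.range n, g (shift^[i] x)

/-- `μ` is a shift-invariant Borel probability measure concentrated on `X`,
i.e. an element of `M(X, σ_X)`. -/
def IsInvariantOn {A : Type*} [MeasurableSpace A] (μ : Measure (ℕ → A))
    (X : Set (ℕ → A)) : Prop :=
  IsProbabilityMeasure μ ∧ μ X = 1 ∧
    ∀ B : Set (ℕ → A), MeasurableSet B → μ (shift ⁻¹' B) = μ B

/-- `μ` is a Gibbs measure for the sequence `𝓕 = {log f_n}`. -/
def GibbsSeq {A : Type*} [MeasurableSpace A] (X : Set (ℕ → A))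
    (f : ℕ → (ℕ → A) → ℝ) (μ : Measure (ℕ → A)) : Prop :=
  ∃ P C : ℝ, 0 < C ∧ ∀ x ∈ X, ∀ n : ℕ, 1 ≤ n →
    C⁻¹ ≤ (μ (cyl X x n)).toReal / (Real.exp (-(n : ℝ) * P) * f n x) ∧
    (μ (cyl X x n)).toReal / (Real.exp (-(n : ℝ) * P) * f n x) ≤ C

/-- `μ` is a weak Gibbs measure for the sequence `𝓕 = {log f_n}`. -/
def WeakGibbsSeq {A : Type*} [MeasurableSpace A] (X : Set (ℕ → A))
    (f : ℕ → (ℕ → A) → ℝ) (μ : Measure (ℕ → A)) : Prop :=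
  ∃ P : ℝ, ∃ C : ℕ → ℝ, (∀ n : ℕ, 1 ≤ n → 0 < C n) ∧
    Tendsto (fun n : ℕ => Real.log (C n) / n) atTop (𝓝 0) ∧
    ∀ x ∈ X, ∀ n : ℕ, 1 ≤ n →
      (C n)⁻¹ ≤ (μ (cyl X x n)).toReal / (Real.exp (-(n : ℝ) * P) * f n x) ∧
      (μ (cyl X x n)).toReal / (Real.exp (-(n : ℝ) * P) * f n x) ≤ C n

/-- `μ` is a Gibbs measure for the (Borel measurable) function `g`. -/
def GibbsFun {A : Type*} [MeasurableSpace A] (X : Set (ℕ → A))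
    (g : (ℕ → A) → ℝ) (μ : Measure (ℕ → A)) : Prop :=
  GibbsSeq X (fun n x => Real.exp (birk g n x)) μ

/-- `μ` is a weak Gibbs measure for the (Borel measurable) function `g`. -/
def WeakGibbsFun {A : Type*} [MeasurableSpace A] (X : Set (ℕ → A))
    (g : (ℕ → A) → ℝ) (μ : Measure (ℕ → A)) : Prop :=
  WeakGibbsSeq X (fun n x => Real.exp (birk g n x)) μ

/-- The sequence `{log f_n}` is almost additive on `X` with constant `C`. -/
def AAOn {A : Type*} (X : Set (ℕ → A)) (f : ℕ → (ℕ → A) → ℝ) (C : ℝ) : Prop :=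
  ∀ x ∈ X, ∀ n m : ℕ, 1 ≤ n → 1 ≤ m →
    Real.exp (-C) * (f n x * f m (shift^[n] x)) ≤ f (n + m) x ∧
    f (n + m) x ≤ Real.exp C * (f n x * f m (shift^[n] x))

/-- The sequence `{log f_n}` is weakly almost additive on `X`. -/
def WeakAAOn {A : Type*} (X : Set (ℕ → A)) (f : ℕ → (ℕ → A) → ℝ) : Prop :=
  ∃ C : ℕ → ℝ, (∀ n : ℕ, 1 ≤ n → 0 < C n) ∧
    Tendsto (fun n : ℕ => C n / n) atTop (𝓝 0) ∧
    ∀ x ∈ X, ∀ n m : ℕ, 1 ≤ n → 1 ≤ m →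
      Real.exp (-(C n)) * (f n x * f m (shift^[n] x)) ≤ f (n + m) x ∧
      f (n + m) x ≤ Real.exp (C n) * (f n x * f m (shift^[n] x))

open scoped Classical

/-- `g_n(y) = sup_{E_n(y)} Σ_{x ∈ E_n(y)} e^{(S_n f)(x)}`: the sum, over all `n`-blocks
of `X` projecting to `y_1…y_n`, of the sup of `e^{S_n f}` over the corresponding
cylinder. -/
noncomputable def gseq {kX kY : ℕ} (X : Set (ℕ → Fin kX)) (πs : Fin kX → Fin kY)
    (f : (ℕ → Fin kX) → ℝ) (n : ℕ) (y : ℕ → Fin kY) : ℝ :=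
  ∑ u : Fin n → Fin kX,
    if ((∃ x ∈ X, ∀ i : Fin n, x ↑i = u i) ∧ ∀ i : Fin n, πs (u i) = y ↑i) then
      ⨆ x : ↥{z ∈ X | ∀ i : Fin n, z ↑i = u i}, Real.exp (birk f n ↑x)
    else 0

/-- `h_n(y) = sup_{E_n(y)} Σ_{x ∈ E_n(y)} e^{(S_{n-1} f)(x)}` for `n ≥ 2`, and
`h_1 = g_1`. -/
noncomputable def hseqS {kX kY : ℕ} (X : Set (ℕ → Fin kX)) (πs : Fin kX → Fin kY)
    (f : (ℕ → Fin kX) → ℝ) (n : ℕ) (y : ℕ → Fin kY) : ℝ :=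
  if n ≤ 1 then gseq X πs f n y
  else
    ∑ u : Fin n → Fin kX,
      if ((∃ x ∈ X, ∀ i : Fin n, x ↑i = u i) ∧ ∀ i : Fin n, πs (u i) = y ↑i) then
        ⨆ x : ↥{z ∈ X | ∀ i : Fin n, z ↑i = u i}, Real.exp (birk f (n - 1) ↑x)
      else 0

/-- Irreducibility of a subshift: any two words appearing in `X` can be connected. -/
def IrreducibleShift {A : Type*} (X : Set (ℕ → A)) : Prop :=
  ∀ u v : List A, AppearsIn X u → AppearsIn X v →
    ∃ w : List A, AppearsIn X (u ++ w ++ v)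

/-- For a factor map collapsing all symbols except `0`, and a two-coordinate potential
given by `F`: `h_n(y)` is the sum over `n`-blocks `x_1…x_n` of `X` with
`π(x_1)…π(x_n) = y_1…y_n` of `e^{F(x_1,x_2)+⋯+F(x_{n-1},x_n)}` (for `n ≥ 2`), and
`h_1(y) = Σ_{a : π(a) = y_1} sup_{x ∈ [a]} e^{f(x)}`. -/
noncomputable def hseqC {l : ℕ} (X : Set (ℕ → Fin l)) (πs : Fin l → Fin 2)
    (F : Fin l → Fin l → ℝ) (f : (ℕ → Fin l) → ℝ) (n : ℕ) (y : ℕ → Fin 2) : ℝ :=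
  if n ≤ 1 then
    ∑ a : Fin l,
      if πs a = y 0 then (⨆ x : ↥{z ∈ X | z 0 = a}, Real.exp (f ↑x)) else 0
  else
    ∑ u : Fin n → Fin l,
      if ((∃ x ∈ X, ∀ i : Fin n, x ↑i = u i) ∧ ∀ i : Fin n, πs (u i) = y ↑i) then
        Real.exp (∑ i : Fin n,
          if h : (↑i + 1 : ℕ) < n then F (u i) (u ⟨↑i + 1, h⟩) else 0)
      else 0

/-- The one-block map of Setting (C): symbol `1` (here `0`) goes to `1` (here `0`),
symbols `2, 3` (here `1, 2`) go to `2` (here `1`). -/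
def projC {l : ℕ} : Fin l → Fin 2 := fun a => if (a : ℕ) = 0 then 0 else 1

/-- The matrix `M(i,j) = e^{f[ij]} a_{ij}` of Setting (C). -/
noncomputable def MC {l : ℕ} (A : Fin l → Fin l → ℕ) (F : Fin l → Fin l → ℝ) :
    Fin l → Fin l → ℝ := fun i j => Real.exp (F i j) * (A i j : ℝ)

/-- Similarity of `2 × 2` real matrices. -/
def Similar2 (M N : Matrix (Fin 2) (Fin 2) ℝ) : Prop :=
  ∃ P : Matrix (Fin 2) (Fin 2) ℝ, IsUnit P.det ∧ N = P⁻¹ * M * P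


theorem q_mono (α β γ δ : ℝ) (hd : 0 ≤ α * δ - β * γ)
    (s t : ℕ → ℝ)
    (hpos : ∀ k, 0 < s k + t k) (hs' : ∀ k, s (k+1) = α * s k + β * t k)
    (ht' : ∀ k, t (k+1) = γ * s k + δ * t k)
    (hW0 : 0 ≤ s 1 * t 0 - s 0 * t 1) : Monotone (fun k => s k / (s k + t k)) := by
  have hW : ∀ k, 0 ≤ s (k+1) * t k - s k * t (k+1) := by
    intro k
    induction k with
    | zero => exact hW0
    | succ k ih =>
      have : s (k+1+1) * t (k+1) - s (k+1) * t (k+1+1)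
          = (α * δ - β * γ) * (s (k+1) * t k - s k * t (k+1)) := by
        rw [hs' (k+1), ht' (k+1), hs' k, ht' k]; ring
      rw [this]; positivity
  apply monotone_nat_of_le_succ
  intro k
  rw [div_le_div_iff₀ (hpos k) (hpos (k+1))]
  nlinarith [hW k]

theorem q_neg (α β γ δ : ℝ)
    (hd : α * δ - β * γ < 0) (htr : 0 < α + δ)
    (s t : ℕ → ℝ)
    (hpos : ∀ k, 0 < s k + t k) (hs' : ∀ k, s (k+1) = α * s k + β * t k)
    (ht' : ∀ k, t (k+1) = γ * s k + δ * t k) :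
    ∃ p, Tendsto (fun k => s k / (s k + t k)) atTop (𝓝 p) := by
  set D := -(α * δ - β * γ) with hD
  have hDpos : 0 < D := by linarith
  set T := α + δ with hT
  set a : ℕ → ℝ := fun k => s k + t k with ha
  have hapos : ∀ k, 0 < a k := hpos
  have hrec : ∀ k, a (k+2) = T * a (k+1) + D * a k := by
    intro k
    simp only [ha, hT, hD]
    rw [hs' (k+1), ht' (k+1), hs' k, ht' k]; ring
  have hrec2 : ∀ k, (T^2 + D) * a (k+1) ≤ a (k+3) := by
    intro k
    have h1 := hrec (k+1)
    have h2 := hrec k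
    have : a (k+3) = T * a (k+2) + D * a (k+1) := h1
    rw [this, h2]
    have := mul_pos htr (mul_pos hDpos (hapos k))
    nlinarith
  set Δ : ℕ → ℝ := fun k => (s (k+1) * t k - s k * t (k+1)) / (a k * a (k+1)) with hΔ
  have hdiff : ∀ k, s (k+1) / a (k+1) - s k / a k = Δ k := by
    intro k
    have h1 := (hapos k).ne'
    have h2 := (hapos (k+1)).ne'
    simp only [hΔ]
    rw [div_sub_div _ _ h2 h1, mul_comm (a (k+1)) (a k)]
    congr 1
    simp only [ha]; ring
  set r := D / (T^2 + D) with hr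
  have hTD : 0 < T^2 + D := by positivity
  have hr0 : 0 ≤ r := by positivity
  have hr1 : r < 1 := by rw [hr, div_lt_one hTD]; have : 0 < T^2 := by positivity
                         linarith
  have hstep : ∀ k, |Δ (k+2)| ≤ r * |Δ (k+1)| := by
    intro k
    have e : Δ (k+2) = - (D * a (k+1) / a (k+3)) * Δ (k+1) := by
      simp only [hΔ]
      have h1 := (hapos (k+1)).ne'
      have h2 := (hapos (k+2)).ne'
      have h3 := (hapos (k+3)).ne'
      have : s (k+2+1) * t (k+2) - s (k+2) * t (k+2+1)
          = -D * (s (k+2) * t (k+1) - s (k+1) * t (k+2)) := by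
        rw [hs' (k+2), ht' (k+2), hs' (k+1), ht' (k+1), hD]; ring
      rw [this]
      show _ / (a (k+2) * a (k+3)) = _ * (_ / (a (k+1) * a (k+2)))
      field_simp
    rw [e, abs_mul, abs_neg]
    apply mul_le_mul_of_nonneg_right _ (abs_nonneg _)
    rw [abs_of_nonneg (by have := hapos (k+1); have := hapos (k+3); positivity), hr,
      div_le_div_iff₀ (hapos _) hTD]
    have := hrec2 k
    nlinarith
  have hgeo : ∀ k, |Δ (k+1)| ≤ |Δ 1| * r ^ k := by
    intro k
    induction k with
    | zero => simp
    | succ k ih =>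
      calc |Δ (k+1+1)| ≤ r * |Δ (k+1)| := hstep k
        _ ≤ r * (|Δ 1| * r ^ k) := by gcongr
        _ = _ := by ring
  have hc : CauchySeq (fun k => s (k+1) / a (k+1)) := by
    apply cauchySeq_of_le_geometric r |Δ 1| hr1
    intro n
    rw [dist_comm, Real.dist_eq]
    rw [hdiff (n+1)]
    exact hgeo n
  obtain ⟨p, hp⟩ := cauchySeq_tendsto_of_complete hc
  exact ⟨p, (tendsto_add_atTop_iff_nat 1).1 hp⟩

theorem q_conv (α β γ δ : ℝ) (htr : 0 < α + δ)
    (s t : ℕ → ℝ) (hs : ∀ k, 0 ≤ s k) (ht : ∀ k, 0 ≤ t k)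
    (hpos : ∀ k, 0 < s k + t k) (hs' : ∀ k, s (k+1) = α * s k + β * t k)
    (ht' : ∀ k, t (k+1) = γ * s k + δ * t k) :
    ∃ p, Tendsto (fun k => s k / (s k + t k)) atTop (𝓝 p) := by
  have key : ∀ (α β γ δ : ℝ) (s t : ℕ → ℝ), (∀ k, 0 ≤ s k) → (∀ k, 0 ≤ t k) →
      (∀ k, 0 < s k + t k) → (∀ k, s (k+1) = α * s k + β * t k) →
      (∀ k, t (k+1) = γ * s k + δ * t k) → 0 ≤ α * δ - β * γ →
      0 ≤ s 1 * t 0 - s 0 * t 1 → ∃ p, Tendsto (fun k => s k / (s k + t k)) atTop (𝓝 p) := by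
    intro α β γ δ s t hs ht hpos hs' ht' hd hW
    refine ⟨_, tendsto_atTop_ciSup (q_mono α β γ δ hd s t hpos hs' ht' hW) ⟨1, ?_⟩⟩
    rintro _ ⟨k, rfl⟩
    rw [div_le_one (hpos k)]; linarith [ht k]
  by_cases hd : 0 ≤ α * δ - β * γ
  · by_cases hW : 0 ≤ s 1 * t 0 - s 0 * t 1
    · exact key α β γ δ s t hs ht hpos hs' ht' hd hW
    · obtain ⟨p, hp⟩ := key δ γ β α t s ht hs (fun k => by linarith [hpos k])
        (fun k => by rw [ht']; ring) (fun k => by rw [hs']; ring) (by linarith) (by nlinarith)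
      refine ⟨1 - p, ?_⟩
      refine (tendsto_const_nhds.sub hp).congr ?_
      intro k
      have := hpos k
      have h2 : t k + s k ≠ 0 := by linarith
      have h3 : s k + t k ≠ 0 := by linarith
      rw [eq_div_iff h3, sub_mul, add_comm (s k), div_mul_cancel₀ _ h2]; ring
  · exact q_neg α β γ δ (not_le.1 hd) htr s t hpos hs' ht'

theorem q_lam (α β γ δ : ℝ) (hα : 0 ≤ α) (hβ : 0 ≤ β) (hγ : 0 ≤ γ) (hδ : 0 ≤ δ)
    (htr : 0 < α)
    (s t : ℕ → ℝ) (hs : ∀ k, 0 ≤ s k)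
    (hpos : ∀ k, 0 < s k + t k) (hs' : ∀ k, s (k+1) = α * s k + β * t k)
    (ht' : ∀ k, t (k+1) = γ * s k + δ * t k) (p q : ℝ) (hp : 0 ≤ p) (hq : 0 ≤ q)
    (hpq : p + q = 1)
    (hlim : Tendsto (fun k => s k / (s k + t k)) atTop (𝓝 p))
    (h1 : α * p + β * q = 0) (h2 : γ * p + δ * q = 0) : False := by
  have hp0 : p = 0 := by
    have : α * p = 0 := by nlinarith [mul_nonneg hβ hq, mul_nonneg hα hp]
    rcases mul_eq_zero.1 this with h | h
    · linarith
    · exact h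
  have hq1 : q = 1 := by linarith
  subst hp0; subst hq1
  have hβ0 : β = 0 := by linarith
  have hδ0 : δ = 0 := by linarith
  subst hβ0; subst hδ0
  have h3 : Tendsto (fun k => s (k+1) / (s (k+1) + t (k+1))) atTop (𝓝 0) :=
    (tendsto_add_atTop_iff_nat 1).2 hlim
  have h4 : ∀ k, s (k+1) / (s (k+1) + t (k+1)) = α / (α + γ) := by
    intro k
    have h5 := hpos (k+1)
    rw [hs', ht'] at h5 ⊢
    have : s k ≠ 0 := by
      intro h; rw [h] at h5; simp at h5
    have h6 : α + γ ≠ 0 := by linarith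
    have h7 : α * s k + 0 * t k + (γ * s k + 0 * t k) ≠ 0 := h5.ne'
    rw [div_eq_div_iff h7 h6]; ring
  have h5 := tendsto_nhds_unique h3 ((tendsto_congr h4).2 tendsto_const_nhds)
  have : 0 < α / (α + γ) := by positivity
  linarith

theorem proj_conv (α β γ δ : ℝ) (hα : 0 ≤ α) (hβ : 0 ≤ β) (hγ : 0 ≤ γ) (hδ : 0 ≤ δ)
    (htr : 0 < α + δ)
    (s t : ℕ → ℝ) (hs : ∀ k, 0 ≤ s k) (ht : ∀ k, 0 ≤ t k)
    (hpos : ∀ k, 0 < s k + t k) (hs' : ∀ k, s (k+1) = α * s k + β * t k)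
    (ht' : ∀ k, t (k+1) = γ * s k + δ * t k) :
    ∃ p q l : ℝ, 0 ≤ p ∧ 0 ≤ q ∧ p + q = 1 ∧ 0 < l ∧
      Tendsto (fun k => s k / (s k + t k)) atTop (𝓝 p) ∧
      Tendsto (fun k => t k / (s k + t k)) atTop (𝓝 q) ∧
      α * p + β * q = l * p ∧ γ * p + δ * q = l * q := by
  obtain ⟨p, hp⟩ := q_conv α β γ δ htr s t hs ht hpos hs' ht'
  have hq : Tendsto (fun k => t k / (s k + t k)) atTop (𝓝 (1 - p)) := by
    refine (tendsto_const_nhds.sub hp).congr ?_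
    intro k
    have h3 := (hpos k).ne'
    rw [eq_div_iff h3, sub_mul, div_mul_cancel₀ _ h3]; ring
  have hp0 : 0 ≤ p := ge_of_tendsto' hp (fun k => div_nonneg (hs k) (hpos k).le)
  have hq0 : 0 ≤ 1 - p := ge_of_tendsto' hq (fun k => div_nonneg (ht k) (hpos k).le)
  have hl : Tendsto (fun k => (α * (s k / (s k + t k)) + β * (t k / (s k + t k)))
      + (γ * (s k / (s k + t k)) + δ * (t k / (s k + t k)))) atTop
      (𝓝 ((α * p + β * (1 - p)) + (γ * p + δ * (1 - p)))) :=
    ((hp.const_mul _).add (hq.const_mul _)).add ((hp.const_mul _).add (hq.const_mul _))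
  set l := (α * p + β * (1 - p)) + (γ * p + δ * (1 - p)) with hldef
  have e1 : α * p + β * (1 - p) = l * p := by
    refine tendsto_nhds_unique ((hp.const_mul _).add (hq.const_mul _))
      ((hl.mul ((tendsto_add_atTop_iff_nat 1).2 hp)).congr ?_)
    intro k
    have h3 := (hpos k).ne'
    have h4 := (hpos (k+1)).ne'
    have h5 : (α * (s k / (s k + t k)) + β * (t k / (s k + t k)))
      + (γ * (s k / (s k + t k)) + δ * (t k / (s k + t k)))
        = (s (k+1) + t (k+1)) / (s k + t k) := by
      rw [hs', ht']; ring
    rw [h5]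
    rw [div_mul_div_comm, mul_comm (s k + t k), mul_div_mul_left _ _ h4, hs']; ring
  have e2 : γ * p + δ * (1 - p) = l * (1 - p) := by
    have : l * (1 - p) = l - (α * p + β * (1 - p)) := by rw [e1]; ring
    rw [this, hldef]; ring
  have hl0 : 0 ≤ l := by positivity
  refine ⟨p, 1 - p, l, hp0, hq0, by ring, lt_of_le_of_ne hl0 ?_, hp, hq, e1, e2⟩
  intro h0
  rw [← h0, zero_mul] at e1 e2
  by_cases hα' : 0 < α
  · exact q_lam α β γ δ hα hβ hγ hδ hα' s t hs hpos hs' ht' p (1-p) hp0 hq0 (by ring) hp e1 e2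
  · have hδ' : 0 < δ := by linarith
    refine q_lam δ γ β α hδ hγ hβ hα hδ' t s ht (fun k => by linarith [hpos k])
      (fun k => by rw [ht']; ring) (fun k => by rw [hs']; ring) (1-p) p hq0 hp0 (by ring) ?_
      (by linarith) (by linarith)
    simpa only [add_comm] using hq

/-- restriction to the first `n` coordinates -/
def resn {A : Type*} (n : ℕ) (x : ℕ → A) : Fin n → A := fun i => x i

theorem measurable_resn {k : ℕ} (n : ℕ) : Measurable (resn n : (ℕ → Fin k) → _) :=
  measurable_pi_lambda _ (fun i => measurable_pi_apply _)

theorem measurable_shift' {k : ℕ} : Measurable (shift : (ℕ → Fin k) → _) :=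
  measurable_pi_lambda _ (fun i => measurable_pi_apply _)

theorem shift_iter {A : Type*} (n : ℕ) (x : ℕ → A) (i : ℕ) : shift^[n] x i = x (n + i) := by
  induction n generalizing x with
  | zero => simp
  | succ n ih => rw [Function.iterate_succ_apply, ih]; simp only [shift]; congr 1; omega

theorem meas_res {k : ℕ} (μ : Measure (ℕ → Fin k)) (n : ℕ) (S : Set (Fin n → Fin k)) :
    μ (resn n ⁻¹' S) = ∑ u : Fin n → Fin k, if u ∈ S then μ (resn n ⁻¹' {u}) else 0 := by
  rw [← Finset.sum_filter]
  rw [sum_measure_preimage_singleton]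
  · congr 1; ext x; simp
  · intro y _; exact measurable_resn n (measurableSet_singleton _)

/-- points whose n-cylinder is inside U -/
def innerS {k : ℕ} (U : Set (ℕ → Fin k)) (n : ℕ) : Set (Fin n → Fin k) :=
  {u | resn n ⁻¹' {u} ⊆ U}

theorem innerS_mono {k : ℕ} (U : Set (ℕ → Fin k)) :
    Monotone (fun n => resn (n+1) ⁻¹' innerS U (n+1)) := by
  intro a b hab x hx y hy
  apply hx
  simp only [Set.mem_preimage, Set.mem_singleton_iff] at hy ⊢
  funext i
  exact congrFun hy ⟨i, by omega⟩

theorem innerS_iUnion {k : ℕ} (U : Set (ℕ → Fin k)) (hU : IsOpen U) :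
    ⋃ n, resn (n+1) ⁻¹' innerS U (n+1) = U := by
  ext x
  simp only [Set.mem_iUnion]
  constructor
  · rintro ⟨n, hn⟩
    exact hn (by simp)
  · intro hx
    obtain ⟨I, u, hu, hsub⟩ := isOpen_pi_iff.1 hU x hx
    refine ⟨I.sup id, fun y hy => hsub ?_⟩
    intro i hi
    have h1 : i ≤ I.sup id := Finset.le_sup (f := id) hi
    have : y i = x i := congrFun hy ⟨i, by omega⟩
    rw [this]; exact (hu i hi).2

theorem le_of_cyl {k : ℕ} (μ₁ μ₂ : Measure (ℕ → Fin k)) [IsFiniteMeasure μ₂]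
    (h : ∀ n, 1 ≤ n → ∀ u : Fin n → Fin k, μ₁ (resn n ⁻¹' {u}) ≤ μ₂ (resn n ⁻¹' {u})) :
    μ₁ ≤ μ₂ := by
  have hopen : ∀ U, IsOpen U → μ₁ U ≤ μ₂ U := by
    intro U hU
    rw [← innerS_iUnion U hU]
    have t1 := tendsto_measure_iUnion_atTop (μ := μ₁) (innerS_mono U)
    have t2 := tendsto_measure_iUnion_atTop (μ := μ₂) (innerS_mono U)
    refine le_of_tendsto_of_tendsto' t1 t2 ?_
    intro n
    simp only [Function.comp]
    rw [meas_res, meas_res]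
    apply Finset.sum_le_sum
    intro u _
    split_ifs
    · exact h _ (by omega) u
    · exact le_rfl
  rw [Measure.le_iff']
  intro B
  by_contra hlt
  push Not at hlt
  obtain ⟨U, hBU, hUo, hU⟩ := B.exists_isOpen_lt_of_lt _ hlt
  exact absurd (measure_mono hBU) (not_le.2 (lt_of_le_of_lt (hopen U hUo) hU))

theorem ac_of_bound {k : ℕ} (ν m : Measure (ℕ → Fin k)) [IsProbabilityMeasure ν]
    [IsProbabilityMeasure m] (K : ℝ)
    (h : ∀ n, 1 ≤ n → ∀ S : Set (Fin n → Fin k), ∀ t : ℝ, 1 ≤ t →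
      ν.real (resn n ⁻¹' S) * Real.log t ≤ K + t * m.real (resn n ⁻¹' S)) : ν ≪ m := by
  have hopen : ∀ U, IsOpen U → ∀ t : ℝ, 1 ≤ t →
      ν.real U * Real.log t ≤ K + t * m.real U := by
    intro U hU t ht
    have t1 := tendsto_measure_iUnion_atTop (μ := ν) (innerS_mono U)
    have t2 := tendsto_measure_iUnion_atTop (μ := m) (innerS_mono U)
    rw [innerS_iUnion U hU] at t1 t2
    have t1' := (ENNReal.tendsto_toReal (measure_ne_top ν U)).comp t1
    have t2' := (ENNReal.tendsto_toReal (measure_ne_top m U)).comp t2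
    refine le_of_tendsto_of_tendsto' (t1'.mul_const _) ((t2'.const_mul t).const_add K) ?_
    intro n
    exact h _ (by omega) _ t ht
  intro B hB
  by_contra hne
  have hpos : 0 < ν.real B := by
    rw [measureReal_def]; exact ENNReal.toReal_pos hne (measure_ne_top _ _)
  have hall : ∀ t : ℝ, 1 ≤ t → ν.real B * Real.log t ≤ K + 1 := by
    intro t ht
    have ht0 : 0 < t := by linarith
    obtain ⟨U, hBU, hUo, hU⟩ := B.exists_isOpen_lt_of_lt (μ := m) (ENNReal.ofReal (1/t))
      (by rw [hB]; simpa using ht0)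
    have h1 := hopen U hUo t ht
    have h2 : ν.real B ≤ ν.real U := measureReal_mono hBU
    have h3 : m.real U ≤ 1/t := by
      rw [measureReal_def]
      exact ENNReal.toReal_le_of_le_ofReal (by positivity) hU.le
    have h4 : t * m.real U ≤ 1 := by
      calc t * m.real U ≤ t * (1/t) := by gcongr
        _ = 1 := by field_simp
    have h5 := Real.log_nonneg ht
    nlinarith
  have := hall (Real.exp ((|K| + 2)/ν.real B)) (by
    rw [← Real.exp_zero]; apply Real.exp_le_exp.2; positivity)
  rw [Real.log_exp, mul_div_cancel₀ _ hpos.ne'] at this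
  linarith [le_abs_self K]

theorem xlog_ge (x y t : ℝ) (hx : 0 ≤ x) (hy : 0 ≤ y) (hxy : 0 < x → 0 < y) (ht : 0 < t) :
    x * Real.log t + x - t * y ≤ x * Real.log (x / y) := by
  rcases hx.eq_or_lt with h | h
  · rw [← h]; simp; positivity
  · have hy' := hxy h
    have h1 := Real.log_le_sub_one_of_pos (show 0 < t * y / x by positivity)
    have h2 : Real.log (t * y / x) = Real.log t - Real.log (x / y) := by
      rw [← Real.log_div ht.ne' (by positivity)]
      congr 1; field_simp
    rw [h2] at h1
    have h3 : x * (Real.log t - Real.log (x/y)) ≤ x * (t * y / x - 1) :=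
      mul_le_mul_of_nonneg_left h1 hx
    have h4 : x * (t * y / x - 1) = t * y - x := by field_simp
    linarith

theorem sum_slices {k n : ℕ} (ν : Measure (ℕ → Fin k)) [IsProbabilityMeasure ν]
    (A : Set (ℕ → Fin k))
    (f : (ℕ → Fin k) → (Fin n → Fin k)) (hf : Measurable f) :
    ∑ v, ν.real (f ⁻¹' {v} ∩ A) = ν.real A := by
  have h := sum_measure_preimage_singleton (μ := ν.restrict A) (f := f) Finset.univ
    (fun y _ => hf (measurableSet_singleton _))
  rw [Finset.coe_univ, Set.preimage_univ, Measure.restrict_apply_univ] at h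
  simp only [measureReal_def]
  rw [← h, ENNReal.toReal_sum (fun _ _ => measure_ne_top _ _)]
  apply Finset.sum_congr rfl
  intro v _
  rw [Measure.restrict_apply (hf (measurableSet_singleton _))]

theorem append_pre {k : ℕ} (n l : ℕ) (u : Fin n → Fin k) (v : Fin l → Fin k) :
    resn (n + l) ⁻¹' {Fin.append u v} =
      (resn n ⁻¹' {u}) ∩ (fun x => resn l (shift^[n] x)) ⁻¹' {v} := by
  ext x
  simp only [Set.mem_preimage, Set.mem_singleton_iff, Set.mem_inter_iff]
  constructor
  · intro h
    constructor
    · funext i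
      have := congrFun h (Fin.castAdd l i)
      simpa [resn] using this
    · funext i
      have := congrFun h (Fin.natAdd n i)
      simpa [resn, shift_iter] using this
  · rintro ⟨h1, h2⟩
    funext i
    refine Fin.addCases (fun i => ?_) (fun i => ?_) i
    · simpa [resn] using congrFun h1 i
    · simpa [resn, shift_iter] using congrFun h2 i

theorem meas_iter {k : ℕ} (ν : Measure (ℕ → Fin k))
    (hinv : ∀ B : Set (ℕ → Fin k), MeasurableSet B → ν (shift ⁻¹' B) = ν B)
    (n : ℕ) (B : Set (ℕ → Fin k)) (hB : MeasurableSet B) : ν (shift^[n] ⁻¹' B) = ν B := by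
  induction n with
  | zero => rfl
  | succ n ih =>
    rw [Function.iterate_succ, Set.preimage_comp, hinv _ (measurable_shift'.iterate n hB), ih]

theorem sum_append {k n l : ℕ} (g : (Fin (n + l) → Fin k) → ℝ) :
    ∑ w, g w = ∑ u : Fin n → Fin k, ∑ v : Fin l → Fin k, g (Fin.append u v) := by
  rw [← Fintype.sum_prod_type' (f := fun u v => g (Fin.append u v))]
  exact ((Fin.appendEquiv n l).sum_comp g).symm

theorem ac_of_subexp {k : ℕ} (ν m : Measure (ℕ → Fin k)) [IsProbabilityMeasure ν]
    [IsProbabilityMeasure m]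
    (hinv : ∀ B : Set (ℕ → Fin k), MeasurableSet B → ν (shift ⁻¹' B) = ν B)
    (K : ℝ) (hK : 0 < K)
    (hm : ∀ n l, 1 ≤ n → 1 ≤ l → ∀ (u : Fin n → Fin k) (v : Fin l → Fin k),
      m.real (resn (n + l) ⁻¹' {Fin.append u v}) ≤
        K * (m.real (resn n ⁻¹' {u}) * m.real (resn l ⁻¹' {v})))
    (ε : ℕ → ℝ) (hε : Tendsto (fun n : ℕ => ε n / n) atTop (𝓝 0))
    (hle : ∀ n, 1 ≤ n → ∀ u : Fin n → Fin k,
      ν.real (resn n ⁻¹' {u}) ≤ Real.exp (ε n) * m.real (resn n ⁻¹' {u})) : ν ≪ m := by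
  set N : (n : ℕ) → (Fin n → Fin k) → ℝ := fun n u => ν.real (resn n ⁻¹' {u}) with hN
  set Q : (n : ℕ) → (Fin n → Fin k) → ℝ := fun n u => m.real (resn n ⁻¹' {u}) with hQ
  have hN0 : ∀ n u, 0 ≤ N n u := fun n u => measureReal_nonneg
  have hQ0 : ∀ n u, 0 ≤ Q n u := fun n u => measureReal_nonneg
  have hNQ : ∀ n, 1 ≤ n → ∀ u, 0 < N n u → 0 < Q n u := by
    intro n hn u h
    have := hle n hn u
    have h2 : 0 < Real.exp (ε n) * Q n u := lt_of_lt_of_le h this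
    exact (mul_pos_iff_of_pos_left (Real.exp_pos _)).1 h2
  have hsum1 : ∀ n, ∑ u, N n u = 1 := by
    intro n
    have := sum_slices ν Set.univ (resn n) (measurable_resn n)
    simpa using this
  have hsumQ1 : ∀ n, ∑ u, Q n u = 1 := by
    intro n
    have := sum_slices m Set.univ (resn n) (measurable_resn n)
    simpa using this
  have hmeas : ∀ n l, Measurable (fun x : ℕ → Fin k => resn l (shift^[n] x)) :=
    fun n l => (measurable_resn l).comp (measurable_shift'.iterate n)
  have hmargR : ∀ n l u, ∑ v, N (n + l) (Fin.append u v) = N n u := by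
    intro n l u
    simp only [hN, append_pre]
    have := sum_slices ν (resn n ⁻¹' {u}) _ (hmeas n l)
    simp_rw [Set.inter_comm] at this ⊢
    exact this
  have hmargL : ∀ n l v, ∑ u, N (n + l) (Fin.append u v) = N l v := by
    intro n l v
    simp only [hN, append_pre]
    rw [sum_slices ν _ (resn n) (measurable_resn n)]
    rw [measureReal_def, measureReal_def]
    congr 1
    exact meas_iter ν hinv n _ (measurable_resn l (measurableSet_singleton _))
  set D : ℕ → ℝ := fun n => ∑ u, N n u * Real.log (N n u / Q n u) with hD
  have hsuper : ∀ n l, 1 ≤ n → 1 ≤ l → D n + D l - Real.log K ≤ D (n + l) := by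
    intro n l hn hl
    have hterm : ∀ (u : Fin n → Fin k) (v : Fin l → Fin k),
        N (n+l) (Fin.append u v) * Real.log (N n u / Q n u)
        + N (n+l) (Fin.append u v) * Real.log (N l v / Q l v)
        - N (n+l) (Fin.append u v) * Real.log K
        + (N (n+l) (Fin.append u v) - N n u * N l v)
        ≤ N (n+l) (Fin.append u v) * Real.log (N (n+l) (Fin.append u v) /
            Q (n+l) (Fin.append u v)) := by
      intro u v
      rcases (hN0 (n+l) (Fin.append u v)).eq_or_lt with h | h
      · rw [← h]; simp only [zero_mul, zero_add, sub_zero, zero_sub]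
        have := mul_nonneg (hN0 n u) (hN0 l v)
        linarith
      · have hu : 0 < N n u := by
          refine lt_of_lt_of_le h ?_
          rw [← hmargR n l u]
          exact Finset.single_le_sum (f := fun v => N (n+l) (Fin.append u v))
            (fun v _ => hN0 _ _) (Finset.mem_univ v)
        have hv : 0 < N l v := by
          refine lt_of_lt_of_le h ?_
          rw [← hmargL n l v]
          exact Finset.single_le_sum (f := fun u => N (n+l) (Fin.append u v))
            (fun v _ => hN0 _ _) (Finset.mem_univ u)
        have hQu := hNQ n hn u hu
        have hQv := hNQ l hl v hv
        have hQw := hNQ (n+l) (by omega) _ h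
        have h1 := xlog_ge (N (n+l) (Fin.append u v)) (N n u * N l v) 1 h.le (by positivity)
          (fun _ => by positivity) one_pos
        rw [Real.log_one, mul_zero, zero_add, one_mul] at h1
        have h2 := hm n l hn hl u v
        have h3 : Real.log (Q (n+l) (Fin.append u v)) ≤
            Real.log K + Real.log (Q n u) + Real.log (Q l v) := by
          rw [← Real.log_mul hK.ne' hQu.ne', ← Real.log_mul (by positivity) hQv.ne', mul_assoc]
          exact Real.log_le_log hQw h2
        rw [Real.log_div h.ne' (by positivity), Real.log_mul hu.ne' hv.ne'] at h1
        rw [Real.log_div h.ne' hQw.ne', Real.log_div hu.ne' hQu.ne', Real.log_div hv.ne' hQv.ne']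
        have h4 := mul_le_mul_of_nonneg_left h3 h.le
        linarith
    have hs := Finset.sum_le_sum (s := Finset.univ) (fun u _ =>
      Finset.sum_le_sum (s := Finset.univ) (fun v _ => hterm u v))
    rw [← sum_append (fun w => N (n+l) w * Real.log (N (n+l) w / Q (n+l) w))] at hs
    simp only [Finset.sum_add_distrib, Finset.sum_sub_distrib] at hs
    have e1 : ∑ u : Fin n → Fin k, ∑ v : Fin l → Fin k,
        N (n+l) (Fin.append u v) * Real.log (N n u / Q n u) = D n := by
      simp only [hD]
      apply Finset.sum_congr rfl
      intro u _
      rw [← Finset.sum_mul, hmargR]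
    have e2 : ∑ u : Fin n → Fin k, ∑ v : Fin l → Fin k,
        N (n+l) (Fin.append u v) * Real.log (N l v / Q l v) = D l := by
      rw [Finset.sum_comm]
      apply Finset.sum_congr rfl
      intro u _
      rw [← Finset.sum_mul, hmargL]
    have e3 : ∑ u : Fin n → Fin k, ∑ v : Fin l → Fin k,
        N (n+l) (Fin.append u v) * Real.log K = Real.log K := by
      simp_rw [← Finset.sum_mul]
      rw [← sum_append (N (n+l)), hsum1, one_mul]
    have e4 : ∑ u : Fin n → Fin k, ∑ v : Fin l → Fin k,
        N (n+l) (Fin.append u v) = 1 := by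
      rw [← sum_append (N (n+l)), hsum1]
    have e5 : ∑ u : Fin n → Fin k, ∑ v : Fin l → Fin k, N n u * N l v = 1 := by
      simp_rw [← Finset.mul_sum, hsum1, mul_one]
      exact hsum1 n
    rw [e1, e2, e3, e4, e5] at hs
    simp only [hD] at hs ⊢
    linarith
  have hDle : ∀ n, 1 ≤ n → D n ≤ ε n := by
    intro n hn
    calc D n ≤ ∑ u, N n u * ε n := by
          apply Finset.sum_le_sum
          intro u _
          rcases (hN0 n u).eq_or_lt with h | h
          · rw [← h]; simp
          · apply mul_le_mul_of_nonneg_left _ h.le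
            have hq := hNQ n hn u h
            rw [Real.log_le_iff_le_exp (by positivity), div_le_iff₀ hq]
            exact hle n hn u
      _ = ε n := by rw [← Finset.sum_mul, hsum1, one_mul]
  have hDb : ∀ n, 1 ≤ n → D n ≤ Real.log K := by
    intro n hn
    have hmul : ∀ j : ℕ, ((j:ℝ)+1) * (D n - Real.log K) ≤ D ((j+1) * n) - Real.log K := by
      intro j
      induction j with
      | zero => simp
      | succ j ih =>
        have := hsuper ((j+1)*n) n (Nat.mul_pos (by omega) hn) hn
        rw [show (j+1+1)*n = (j+1)*n + n by ring]
        push_cast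
        linarith
    by_contra hlt
    push Not at hlt
    have hn' : (0:ℝ) < n := by exact_mod_cast hn
    have t1 : Tendsto (fun j : ℕ => (j+1) * n) atTop atTop := by
      apply tendsto_atTop_mono (fun j => ?_) tendsto_id
      simp only [id]; nlinarith
    have t2 := hε.comp t1
    have t3 : Tendsto (fun j : ℕ => Real.log K / (((j:ℝ)+1) * n)) atTop (𝓝 0) := by
      apply Tendsto.const_div_atTop
      apply Tendsto.atTop_mul_const hn'
      exact tendsto_atTop_add_const_right _ _ tendsto_natCast_atTop_atTop
    have h := ge_of_tendsto' (b := (D n - Real.log K) / n) (t2.sub t3) (by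
      intro j
      simp only [Function.comp]
      have h1 := hmul j
      have h2 := hDle ((j+1)*n) (Nat.mul_pos (by omega) hn)
      push_cast
      rw [← sub_div, div_le_div_iff₀ hn' (by positivity)]
      nlinarith)
    have : 0 < (D n - Real.log K) / n := div_pos (by linarith) hn'
    linarith
  apply ac_of_bound ν m (Real.log K)
  intro n hn S t ht
  have ht0 : 0 < t := by linarith
  have e : ∀ (μ : Measure (ℕ → Fin k)) [IsProbabilityMeasure μ], μ.real (resn n ⁻¹' S)
      = ∑ u, if u ∈ S then μ.real (resn n ⁻¹' {u}) else 0 := by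
    intro μ _
    rw [measureReal_def, meas_res, ENNReal.toReal_sum]
    · apply Finset.sum_congr rfl
      intro u _
      split_ifs <;> simp [measureReal_def]
    · intro u _; split_ifs <;> simp
  have hpt : ∀ u, (if u ∈ S then N n u else 0) * Real.log t + N n u
      - t * (if u ∈ S then Q n u else 0) - Q n u ≤ N n u * Real.log (N n u / Q n u) := by
    intro u
    by_cases hu : u ∈ S
    · simp only [hu, if_true]
      have := xlog_ge (N n u) (Q n u) t (hN0 _ _) (hQ0 _ _) (hNQ n hn u) ht0
      linarith [hQ0 n u]
    · simp only [hu, if_false]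
      have := xlog_ge (N n u) (Q n u) 1 (hN0 _ _) (hQ0 _ _) (hNQ n hn u) one_pos
      simp only [Real.log_one] at this
      linarith
  have hs := Finset.sum_le_sum (s := Finset.univ) (fun u _ => hpt u)
  simp only [Finset.sum_add_distrib, Finset.sum_sub_distrib, ← Finset.mul_sum, ← Finset.sum_mul]
    at hs
  rw [hsum1, hsumQ1, ← e ν, ← e m] at hs
  have := hDb n hn
  simp only [hD] at this
  linarith

theorem meas_SFT {k : ℕ} (R : Fin k → Fin k → Prop) :
    MeasurableSet {x : ℕ → Fin k | ∀ n, R (x n) (x (n+1))} := by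
  rw [Set.ofPred_forall]
  apply MeasurableSet.iInter
  intro n
  have hm : Measurable (fun x : ℕ → Fin k => (x n, x (n+1))) :=
    (measurable_pi_apply n).prodMk (measurable_pi_apply (n+1))
  exact hm (t := {q | R q.1 q.2}) (Set.toFinite _).measurableSet

theorem cyl_eq {k : ℕ} (X : Set (ℕ → Fin k)) (x : ℕ → Fin k) (n : ℕ) :
    cyl X x n = X ∩ resn n ⁻¹' {resn n x} := by
  ext z
  simp only [cyl, Set.mem_ofPred_eq, Set.mem_inter_iff, Set.mem_preimage, Set.mem_singleton_iff]
  refine and_congr_right (fun _ => ?_)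
  constructor
  · intro h; funext i; exact h i i.2
  · intro h i hi; exact congrFun h ⟨i, hi⟩

theorem meas_cyl {k : ℕ} (X : Set (ℕ → Fin k)) (hX : MeasurableSet X) (μ : Measure (ℕ → Fin k))
    [IsProbabilityMeasure μ] (h1 : μ X = 1) (x : ℕ → Fin k) (n : ℕ) :
    μ (cyl X x n) = μ (resn n ⁻¹' {resn n x}) := by
  rw [cyl_eq, Set.inter_comm]
  apply measure_inter_conull
  exact (prob_compl_eq_zero_iff hX).2 h1

theorem birk_add {A : Type*} (g : (ℕ → A) → ℝ) (n m : ℕ) (x : ℕ → A) :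
    birk g (n + m) x = birk g n x + birk g m (shift^[n] x) := by
  simp only [birk]
  rw [Finset.sum_range_add]
  congr 1
  apply Finset.sum_congr rfl
  intro i _
  rw [← Function.iterate_add_apply, add_comm]

theorem birk_ge {A : Type*} (g : (ℕ → A) → ℝ) (R : ℝ) (hR : ∀ x, |g x| ≤ R) (n : ℕ)
    (x : ℕ → A) : -(n * R) ≤ birk g n x := by
  have : |birk g n x| ≤ n * R := by
    unfold birk
    refine (Finset.abs_sum_le_sum_abs _ _).trans ?_
    refine (Finset.sum_le_sum (fun i _ => hR _)).trans ?_
    simp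
  exact (abs_le.1 this).1

theorem conn {k : ℕ} (A : Fin k → Fin k → ℕ)
    (X : Set (ℕ → Fin k)) (hXdef : X = {x | ∀ n : ℕ, A (x n) (x (n + 1)) = 1})
    (hXirr : IrreducibleShift X) :
    ∃ p, ∀ x ∈ X, ∀ x' ∈ X, ∀ n, 1 ≤ n → ∃ L ≤ p, ∃ z ∈ X, (∀ i < n, z i = x i) ∧
      shift^[n+L] z = x' := by
  have key : ∀ i j : Fin k, ∃ L : ℕ, (AppearsIn X [i] → AppearsIn X [j] →
      ∃ w ∈ X, ∃ m, w m = i ∧ w (m + 1 + L) = j) := by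
    intro i j
    by_cases h : AppearsIn X [i] ∧ AppearsIn X [j]
    · obtain ⟨l, w, hw, m, hm⟩ := hXirr [i] [j] h.1 h.2
      refine ⟨l.length, fun _ _ => ⟨w, hw, m, ?_, ?_⟩⟩
      · have := hm ⟨0, by simp⟩
        simpa using this
      · have := hm ⟨1 + l.length, by simp; omega⟩
        simp only [List.get_eq_getElem] at this
        rw [add_assoc, this]
        rw [List.getElem_append_right (by simp)]
        simp
    · exact ⟨0, fun h1 h2 => absurd ⟨h1, h2⟩ h⟩
  choose Lf hLf using key
  refine ⟨Finset.univ.sup (fun q : Fin k × Fin k => Lf q.1 q.2), ?_⟩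
  intro x hx x' hx' n hn
  have ap : ∀ y ∈ X, ∀ t, AppearsIn X [y t] := fun y hy t => ⟨y, hy, t, fun i => by simp⟩
  obtain ⟨w, hw, m, hm1, hm2⟩ := hLf (x (n-1)) (x' 0) (ap x hx _) (ap x' hx' _)
  set L := Lf (x (n-1)) (x' 0) with hL
  refine ⟨L, Finset.le_sup (f := fun q : Fin k × Fin k => Lf q.1 q.2)
    (Finset.mem_univ (x (n-1), x' 0)), 
    fun t => if t < n then x t else if t < n + L then w (m + 1 + (t - n)) else x' (t - (n + L)),
    ?_, ?_, ?_⟩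
  · rw [hXdef] at hx hx' hw ⊢
    intro t
    have e1 := hx t
    have e2 := hw (m + 1 + (t - n))
    have e3 := hx' (t - (n+L))
    have e4 := hw m
    simp only
    by_cases c1 : t + 1 < n
    · rw [if_pos (by omega), if_pos c1]; exact e1
    · by_cases c2 : t < n
      · have ht : t = n - 1 := by omega
        rw [if_pos c2, if_neg c1]
        by_cases c3 : t + 1 < n + L
        · rw [if_pos c3, ht, ← hm1, show m + 1 + (n - 1 + 1 - n) = m + 1 by omega]; exact e4
        · have hL0 : L = 0 := by omega
          rw [if_neg c3, show t + 1 - (n + L) = 0 by omega, ht, ← hm1, ← hm2, hL0]; exact e4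
      · rw [if_neg c2, if_neg c1]
        by_cases c3 : t + 1 < n + L
        · rw [if_pos c3, if_pos (by omega), show m + 1 + (t + 1 - n) = m + 1 + (t - n) + 1 by omega]
          exact e2
        · by_cases c4 : t < n + L
          · rw [if_pos c4, if_neg c3, show t + 1 - (n+L) = 0 by omega, ← hm2,
              show m + 1 + L = m + 1 + (t - n) + 1 by omega]
            exact e2
          · rw [if_neg c4, if_neg c3, show t + 1 - (n+L) = t - (n + L) + 1 by omega]; exact e3
  · intro i hi; simp only; rw [if_pos hi]
  · funext i
    rw [shift_iter]
    rw [if_neg (by omega), if_neg (by omega)]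
    congr 1; omega

theorem ergodic_of_gibbs {k : ℕ} (A : Fin k → Fin k → ℕ)
    (X : Set (ℕ → Fin k)) (hXdef : X = {x | ∀ n : ℕ, A (x n) (x (n + 1)) = 1})
    (hXirr : IrreducibleShift X) (f : (ℕ → Fin k) → ℝ) (R : ℝ) (hR : ∀ x, |f x| ≤ R)
    (μ : Measure (ℕ → Fin k)) (hμinv : IsInvariantOn μ X) (hμG : GibbsFun X f μ) :
    Ergodic shift μ := by
  obtain ⟨hprob, hμX, hinv⟩ := hμinv
  have hXm : MeasurableSet X := by
    rw [hXdef]; exact meas_SFT (fun i j => A i j = 1)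
  have hcm : ∀ n (u : Fin n → Fin k), MeasurableSet (resn n ⁻¹' {u}) := fun n u =>
    measurable_resn n (measurableSet_singleton _)
  obtain ⟨P, C, hC, hG⟩ := hμG
  obtain ⟨p, hp⟩ := conn A X hXdef hXirr
  have hG' : ∀ x ∈ X, ∀ n : ℕ, 1 ≤ n →
      C⁻¹ * (Real.exp (-n * P) * Real.exp (birk f n x)) ≤ μ.real (resn n ⁻¹' {resn n x}) ∧
      μ.real (resn n ⁻¹' {resn n x}) ≤ C * (Real.exp (-n * P) * Real.exp (birk f n x)) := by
    intro x hx n hn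
    have := hG x hx n hn
    rw [meas_cyl X hXm μ hμX] at this
    rw [le_div_iff₀ (by positivity), div_le_iff₀ (by positivity)] at this
    exact this
  set c := C⁻¹ * (C⁻¹ * C⁻¹ * Real.exp (-(p * (|P| + R)))) with hc
  have hcpos : 0 < c := by positivity
  have hR0 : 0 ≤ R := (abs_nonneg _).trans (hR (fun _ => 
    (by
      have : X.Nonempty := by
        by_contra h
        rw [Set.not_nonempty_iff_eq_empty] at h
        rw [h] at hμX; simp at hμX
      exact this.some 0)))
  have hmem : ∀ n (u : Fin n → Fin k), μ (resn n ⁻¹' {u}) ≠ 0 → ∃ x ∈ X, resn n x = u := by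
    intro n u h
    by_contra hcon
    push Not at hcon
    apply h
    rw [← measure_inter_conull ((prob_compl_eq_zero_iff hXm).2 hμX)]
    convert measure_empty (μ := μ)
    ext x; simp only [Set.mem_inter_iff, Set.mem_preimage, Set.mem_singleton_iff,
      Set.mem_empty_iff_false, iff_false, not_and]
    intro h1 h2; exact hcon x h2 h1
  have hmix : ∀ n l, 1 ≤ n → 1 ≤ l → ∀ (u : Fin n → Fin k) (v : Fin l → Fin k),
      ENNReal.ofReal c * μ (resn n ⁻¹' {u}) * μ (resn l ⁻¹' {v}) ≤
        ∑ L ∈ Finset.range (p+1), μ (shift^[n+L] ⁻¹' (resn l ⁻¹' {v}) ∩ resn n ⁻¹' {u}) := by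
    intro n l hn hl u v
    by_cases h0 : μ (resn n ⁻¹' {u}) = 0 ∨ μ (resn l ⁻¹' {v}) = 0
    · rcases h0 with h0 | h0 <;> rw [h0] <;> simp
    push Not at h0
    obtain ⟨x, hx, rfl⟩ := hmem n u h0.1
    obtain ⟨x', hx', rfl⟩ := hmem l v h0.2
    obtain ⟨L, hL, z, hz, hz1, hz2⟩ := hp x hx x' hx' n hn
    refine le_trans ?_ (Finset.single_le_sum (f := fun L => μ (shift^[n+L] ⁻¹'
      (resn l ⁻¹' {resn l x'}) ∩ resn n ⁻¹' {resn n x})) (fun _ _ => zero_le)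
      (Finset.mem_range.2 (Nat.lt_succ_of_le hL)))
    have hres : resn n z = resn n x := by funext i; exact hz1 i i.2
    have hsub : resn (n+L+l) ⁻¹' {resn (n+L+l) z} ⊆ shift^[n+L] ⁻¹'
      (resn l ⁻¹' {resn l x'}) ∩ resn n ⁻¹' {resn n x} := by
      intro y hy
      simp only [Set.mem_preimage, Set.mem_singleton_iff, Set.mem_inter_iff] at hy ⊢
      constructor
      · rw [← hz2]; funext i
        simp only [resn, shift_iter]
        exact congrFun hy ⟨n + L + i, by omega⟩
      · rw [← hres]; funext i
        exact congrFun hy ⟨i, by omega⟩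
    refine le_trans ?_ (measure_mono hsub)
    rw [← ENNReal.toReal_le_toReal (by finiteness) (by finiteness)]
    rw [ENNReal.toReal_mul, ENNReal.toReal_mul, ENNReal.toReal_ofReal hcpos.le]
    change c * μ.real _ * μ.real _ ≤ μ.real _
    have g1 := (hG' z hz n hn).2
    have g2 := (hG' x' hx' l hl).2
    have g3 := (hG' z hz (n+L+l) (by omega)).1
    rw [hres] at g1
    refine le_trans ?_ g3
    have hLp : (L:ℝ) ≤ p := by exact_mod_cast hL
    have e1 : Real.exp (-(p * (|P| + R))) * (Real.exp (-n * P) * Real.exp (birk f n z)) *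
        (Real.exp (-l * P) * Real.exp (birk f l x')) ≤
        Real.exp (-((n+L+l : ℕ):ℝ) * P) * Real.exp (birk f (n+L+l) z) := by
      rw [birk_add, hz2, birk_add]
      simp only [← Real.exp_add]
      apply Real.exp_le_exp.2
      have h1 := birk_ge f R hR L (shift^[n] z)
      have h2 : (L:ℝ) * P ≤ p * |P| := by
        calc (L:ℝ) * P ≤ L * |P| := by gcongr; exact le_abs_self P
          _ ≤ p * |P| := by gcongr
      have h3 : (L:ℝ) * R ≤ p * R := by gcongr
      push_cast
      nlinarith
    calc c * μ.real (resn n ⁻¹' {resn n x}) * μ.real (resn l ⁻¹' {resn l x'})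
        ≤ c * (C * (Real.exp (-n * P) * Real.exp (birk f n z))) *
          (C * (Real.exp (-l * P) * Real.exp (birk f l x'))) := by gcongr
      _ = C⁻¹ * (Real.exp (-(p * (|P| + R))) * (Real.exp (-n * P) * Real.exp (birk f n z)) *
        (Real.exp (-l * P) * Real.exp (birk f l x'))) := by
          rw [hc]; field_simp
      _ ≤ _ := by gcongr
  refine ⟨⟨measurable_shift', ?_⟩, ⟨?_⟩⟩
  · ext B hB
    rw [Measure.map_apply measurable_shift' hB, hinv B hB]
  intro B hB hBinv
  have hiter : ∀ j, shift^[j] ⁻¹' B = B := by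
    intro j
    induction j with
    | zero => rfl
    | succ j ih => rw [Function.iterate_succ, Set.preimage_comp, ih, hBinv]
  have h1 : ∀ n, 1 ≤ n → ∀ u : Fin n → Fin k,
      ENNReal.ofReal c * μ (resn n ⁻¹' {u}) * μ B ≤ (p+1 : ℕ) * μ (B ∩ resn n ⁻¹' {u}) := by
    intro n hn u
    have hle : (ENNReal.ofReal c * μ (resn n ⁻¹' {u})) • μ ≤
        ∑ L ∈ Finset.range (p+1), (μ.restrict (resn n ⁻¹' {u})).map (shift^[n+L]) := by
      apply le_of_cyl
      intro l hl v
      rw [Measure.smul_apply, smul_eq_mul, Measure.finsetSum_apply]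
      refine (hmix n l hn hl u v).trans (le_of_eq ?_)
      apply Finset.sum_congr rfl
      intro L _
      rw [Measure.map_apply (measurable_shift'.iterate _) (hcm l v),
        Measure.restrict_apply (measurable_shift'.iterate _ (hcm l v))]
    have := hle B
    rw [Measure.smul_apply, smul_eq_mul, Measure.finsetSum_apply] at this
    refine this.trans (le_of_eq ?_)
    rw [Finset.sum_congr rfl (g := fun _ => μ (B ∩ resn n ⁻¹' {u}))]
    · simp
    · intro L _
      rw [Measure.map_apply (measurable_shift'.iterate _) hB,
        Measure.restrict_apply (measurable_shift'.iterate _ hB), hiter]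
  have h2 : (ENNReal.ofReal c * μ B) • μ ≤ ((p+1 : ℕ) : ENNReal) • μ.restrict B := by
    have hfin : IsFiniteMeasure (((p+1 : ℕ) : ENNReal) • μ.restrict B) :=
      Measure.smul_finite _ (by finiteness)
    apply le_of_cyl
    intro n hn u
    rw [Measure.smul_apply, Measure.smul_apply, smul_eq_mul, smul_eq_mul,
      Measure.restrict_apply (hcm n u), Set.inter_comm, mul_right_comm]
    exact h1 n hn u
  have h3 := h2 Bᶜ
  rw [Measure.smul_apply, Measure.smul_apply, smul_eq_mul, smul_eq_mul,
      Measure.restrict_apply hB.compl, Set.compl_inter_self, measure_empty, mul_zero] at h3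
  have h4 := le_antisymm h3 (zero_le)
  rw [mul_eq_zero, mul_eq_zero] at h4
  rw [eventuallyConst_set']
  rcases h4 with (h4 | h4) | h4
  · exact absurd h4 (by simpa using hcpos)
  · left; exact ae_eq_empty.2 h4
  · right; exact ae_eq_univ.2 h4

/-- summand of `gseq` -/
def tI {kX kY : ℕ} (X : Set (ℕ → Fin kX)) (πs : Fin kX → Fin kY)
    (f : (ℕ → Fin kX) → ℝ) (n : ℕ) (u : Fin n → Fin kX) (y : ℕ → Fin kY) : ℝ :=
  if ((∃ x ∈ X, ∀ i : Fin n, x ↑i = u i) ∧ ∀ i : Fin n, πs (u i) = y ↑i) then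
      ⨆ x : ↥{z ∈ X | ∀ i : Fin n, z ↑i = u i}, Real.exp (birk f n ↑x)
    else 0

theorem gseq_eq {kX kY : ℕ} (X : Set (ℕ → Fin kX)) (πs : Fin kX → Fin kY)
    (f : (ℕ → Fin kX) → ℝ) (n : ℕ) (y : ℕ → Fin kY) :
    gseq X πs f n y = ∑ u, tI X πs f n u y := rfl

section
variable {kX kY : ℕ} (X : Set (ℕ → Fin kX)) (πs : Fin kX → Fin kY)
    (f : (ℕ → Fin kX) → ℝ) (R : ℝ) (hR : ∀ x, |f x| ≤ R)

theorem birk_le (g : (ℕ → Fin kX) → ℝ) (hR : ∀ x, |g x| ≤ R) (n : ℕ)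
    (x : ℕ → Fin kX) : birk g n x ≤ n * R := by
  have := birk_ge (fun x => - g x) R (fun x => by rw [abs_neg]; exact hR x) n x
  have e : birk (fun x => - g x) n x = - birk g n x := by simp [birk]
  rw [e] at this; linarith

theorem tI_bdd (hR : ∀ x, |f x| ≤ R) (n : ℕ) (u : Fin n → Fin kX) : BddAbove (Set.range
    (fun x : ↥{z ∈ X | ∀ i : Fin n, z ↑i = u i} => Real.exp (birk f n ↑x))) := by
  refine ⟨Real.exp (n * R), ?_⟩
  rintro _ ⟨x, rfl⟩
  exact Real.exp_le_exp.2 (birk_le R f hR n x)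

theorem tI_nonneg (n : ℕ) (u : Fin n → Fin kX) (y : ℕ → Fin kY) : 0 ≤ tI X πs f n u y := by
  unfold tI
  split_ifs
  · exact Real.iSup_nonneg (fun _ => (Real.exp_pos _).le)
  · exact le_rfl

theorem tI_ge (hR : ∀ x, |f x| ≤ R) (n : ℕ) (u : Fin n → Fin kX) (y : ℕ → Fin kY)
    (x : ℕ → Fin kX) (hx : x ∈ X)
    (hxu : ∀ i : Fin n, x ↑i = u i) (hu : ∀ i : Fin n, πs (u i) = y ↑i) :
    Real.exp (birk f n x) ≤ tI X πs f n u y := by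
  unfold tI
  rw [if_pos ⟨⟨x, hx, hxu⟩, hu⟩]
  exact le_ciSup (tI_bdd X f R hR n u) ⟨x, hx, hxu⟩

theorem tI_le (n : ℕ) (u : Fin n → Fin kX) (y : ℕ → Fin kY) (a : ℝ)
    (x : ℕ → Fin kX) (hx : x ∈ X) (hxu : ∀ i : Fin n, x ↑i = u i)
    (h : ∀ x ∈ X, (∀ i : Fin n, x ↑i = u i) → Real.exp (birk f n x) ≤ a) :
    tI X πs f n u y ≤ a := by
  unfold tI
  split_ifs
  · have : Nonempty ↥{z ∈ X | ∀ i : Fin n, z ↑i = u i} := ⟨⟨x, hx, hxu⟩⟩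
    exact ciSup_le (fun z => h z z.2.1 z.2.2)
  · exact (Real.exp_pos _).le.trans (h x hx hxu)

theorem gseq_pos (hR : ∀ x, |f x| ≤ R) (n : ℕ) (y : ℕ → Fin kY) (x : ℕ → Fin kX)
    (hx : x ∈ X) (hxy : ∀ i, πs (x i) = y i) : 0 < gseq X πs f n y := by
  rw [gseq_eq]
  refine lt_of_lt_of_le ?_ (Finset.single_le_sum (fun u _ => tI_nonneg X πs f n u y)
    (Finset.mem_univ (resn n x)))
  exact lt_of_lt_of_le (Real.exp_pos _) (tI_ge X πs f R hR n _ y x hx (fun i => rfl)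
    (fun i => hxy i))

theorem gseq_congr (n : ℕ) (y y' : ℕ → Fin kY) (h : ∀ i < n, y i = y' i) :
    gseq X πs f n y = gseq X πs f n y' := by
  rw [gseq_eq, gseq_eq]
  apply Finset.sum_congr rfl
  intro u _
  unfold tI
  have : (∀ i : Fin n, πs (u i) = y ↑i) ↔ (∀ i : Fin n, πs (u i) = y' ↑i) :=
    forall_congr' (fun i => by rw [h i i.2])
  simp only [this]

theorem gseq_submul (hR : ∀ x, |f x| ≤ R) (hX : ∀ x ∈ X, ∀ n, shift^[n] x ∈ X)
    (n m : ℕ) (y : ℕ → Fin kY) :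
    gseq X πs f (n + m) y ≤ gseq X πs f n y * gseq X πs f m (shift^[n] y) := by
  rw [gseq_eq, gseq_eq, gseq_eq, sum_append, Finset.sum_mul_sum]
  apply Finset.sum_le_sum
  intro u _
  apply Finset.sum_le_sum
  intro v _
  by_cases hc : ((∃ x ∈ X, ∀ i : Fin (n+m), x ↑i = Fin.append u v i) ∧
      ∀ i : Fin (n+m), πs (Fin.append u v i) = y ↑i)
  · obtain ⟨⟨x, hx, hxu⟩, hπ⟩ := hc
    refine tI_le X πs f _ _ _ _ x hx hxu ?_
    intro z hz hzu
    rw [birk_add, Real.exp_add]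
    apply mul_le_mul _ _ (Real.exp_pos _).le (tI_nonneg _ _ _ _ _ _)
    · apply tI_ge X πs f R hR n u y z hz
      · intro i; simpa using hzu (Fin.castAdd m i)
      · intro i; simpa using hπ (Fin.castAdd m i)
    · apply tI_ge X πs f R hR m v _ _ (hX z hz n)
      · intro i; rw [shift_iter]; simpa using hzu (Fin.natAdd n i)
      · intro i; rw [shift_iter]; simpa using hπ (Fin.natAdd n i)
  · rw [tI, if_neg hc]
    exact mul_nonneg (tI_nonneg _ _ _ _ _ _) (tI_nonneg _ _ _ _ _ _)

theorem push_bounds (hR : ∀ x, |f x| ≤ R) (hXm : MeasurableSet X) (μ : Measure (ℕ → Fin kX))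
    [IsProbabilityMeasure μ] (hμX : μ X = 1) (P C : ℝ) (hC : 0 < C)
    (hG : ∀ x ∈ X, ∀ n : ℕ, 1 ≤ n →
      C⁻¹ ≤ (μ (cyl X x n)).toReal / (Real.exp (-(n : ℝ) * P) * Real.exp (birk f n x)) ∧
      (μ (cyl X x n)).toReal / (Real.exp (-(n : ℝ) * P) * Real.exp (birk f n x)) ≤ C)
    (n : ℕ) (hn : 1 ≤ n) (y : ℕ → Fin kY) :
    C⁻¹ * (Real.exp (-(n : ℝ) * P) * gseq X πs f n y) ≤
      (μ.map (fun x => πs ∘ x)).real (resn n ⁻¹' {resn n y}) ∧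
    (μ.map (fun x => πs ∘ x)).real (resn n ⁻¹' {resn n y}) ≤
      C * (Real.exp (-(n : ℝ) * P) * gseq X πs f n y) := by
  have hG' : ∀ x ∈ X, 
      C⁻¹ * (Real.exp (-n * P) * Real.exp (birk f n x)) ≤ μ.real (resn n ⁻¹' {resn n x}) ∧
      μ.real (resn n ⁻¹' {resn n x}) ≤ C * (Real.exp (-n * P) * Real.exp (birk f n x)) := by
    intro x hx
    have := hG x hx n hn
    rw [meas_cyl X hXm μ hμX] at this
    rw [le_div_iff₀ (by positivity), div_le_iff₀ (by positivity)] at this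
    exact this
  have hπm : Measurable (fun x : ℕ → Fin kX => πs ∘ x) :=
    measurable_pi_lambda _ (fun i => (measurable_of_finite πs).comp (measurable_pi_apply i))
  have e : (μ.map (fun x => πs ∘ x)).real (resn n ⁻¹' {resn n y})
      = ∑ u : Fin n → Fin kX, if πs ∘ u = resn n y then μ.real (resn n ⁻¹' {u}) else 0 := by
    rw [measureReal_def, Measure.map_apply hπm (measurable_resn n (measurableSet_singleton _))]
    have : (fun x : ℕ → Fin kX => πs ∘ x) ⁻¹' (resn n ⁻¹' {resn n y})
      = resn n ⁻¹' {u | πs ∘ u = resn n y} := rfl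
    rw [this, meas_res, ENNReal.toReal_sum]
    · apply Finset.sum_congr rfl
      intro u _
      simp only [Set.mem_ofPred_eq]
      split_ifs <;> simp [measureReal_def]
    · intro u _; split_ifs <;> simp
  rw [e, gseq_eq, ← mul_assoc, ← mul_assoc, Finset.mul_sum, Finset.mul_sum]
  have hpt : ∀ u : Fin n → Fin kX, C⁻¹ * Real.exp (-(n : ℝ) * P) * tI X πs f n u y ≤
      (if πs ∘ u = resn n y then μ.real (resn n ⁻¹' {u}) else 0) ∧ 
      (if πs ∘ u = resn n y then μ.real (resn n ⁻¹' {u}) else 0) ≤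
        C * Real.exp (-(n : ℝ) * P) * tI X πs f n u y := by
    intro u
    by_cases hc : πs ∘ u = resn n y
    · have hc' : ∀ i : Fin n, πs (u i) = y ↑i := fun i => congrFun hc i
      rw [if_pos hc]
      by_cases hx : ∃ x ∈ X, ∀ i : Fin n, x ↑i = u i
      · obtain ⟨x, hx, hxu⟩ := hx
        have eu : ∀ z : ℕ → Fin kX, (∀ i : Fin n, z ↑i = u i) → resn n z = u :=
          fun z hz => funext hz
        constructor
        · rw [mul_assoc, inv_mul_le_iff₀ hC, mul_comm, ← le_div_iff₀ (Real.exp_pos _)]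
          refine tI_le X πs f n u y _ x hx hxu ?_
          intro z hz hzu
          have := (hG' z hz).1
          rw [eu z hzu, inv_mul_le_iff₀ hC] at this
          rw [le_div_iff₀ (Real.exp_pos _), mul_comm]
          exact this
        · have := (hG' x hx).2
          rw [eu x hxu] at this
          refine this.trans ?_
          rw [mul_assoc]
          have := tI_ge X πs f R hR n u y x hx hxu hc'
          gcongr
      · have h0 : tI X πs f n u y = 0 := if_neg (fun h => hx h.1)
        rw [h0, mul_zero, mul_zero]
        have : μ.real (resn n ⁻¹' {u}) = 0 := by
          rw [measureReal_def, ← measure_inter_conull ((prob_compl_eq_zero_iff hXm).2 hμX)]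
          have he : resn n ⁻¹' {u} ∩ X = ∅ := by
            ext x; simp only [Set.mem_inter_iff, Set.mem_preimage, Set.mem_singleton_iff,
              Set.mem_empty_iff_false, iff_false, not_and]
            intro h1 h2; exact hx ⟨x, h2, fun i => congrFun h1 i⟩
          rw [he]; simp
        rw [this]; simp
    · rw [if_neg hc]
      have h0 : tI X πs f n u y = 0 := if_neg (fun h => hc (funext h.2))
      rw [h0]; simp
  exact ⟨Finset.sum_le_sum (fun u _ => (hpt u).1), Finset.sum_le_sum (fun u _ => (hpt u).2)⟩

end

/-- weight vector -/
def Gv {kX kY : ℕ} (X : Set (ℕ → Fin kX)) (πs : Fin kX → Fin kY)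
    (f : (ℕ → Fin kX) → ℝ) (n : ℕ) (y : ℕ → Fin kY) (i : Fin kX) : ℝ :=
  ∑ u : Fin n → Fin kX, tI X πs f (n+1) (Fin.cons i u) y

theorem sum_cons {k n : ℕ} (g : (Fin (n+1) → Fin k) → ℝ) :
    ∑ w, g w = ∑ i : Fin k, ∑ u : Fin n → Fin k, g (Fin.cons i u) := by
  rw [← Fintype.sum_prod_type' (f := fun i (u : Fin n → Fin k) => g (Fin.cons i u))]
  exact ((Fin.consEquiv (fun _ : Fin (n+1) => Fin k)).sum_comp g).symm

theorem gseq_Gv {kX kY : ℕ} (X : Set (ℕ → Fin kX)) (πs : Fin kX → Fin kY)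
    (f : (ℕ → Fin kX) → ℝ) (n : ℕ) (y : ℕ → Fin kY) :
    gseq X πs f (n+1) y = ∑ i, Gv X πs f n y i := by
  rw [gseq_eq, sum_cons]; rfl

/-- prepend a symbol -/
def consSeq {B : Type*} (i : B) (x : ℕ → B) : ℕ → B
  | 0 => i
  | (n+1) => x n

theorem tI_rec {k kY : ℕ} (A : Fin k → Fin k → ℕ) (hA01 : ∀ i j, A i j = 0 ∨ A i j = 1)
    (X : Set (ℕ → Fin k)) (hXdef : X = {x | ∀ n : ℕ, A (x n) (x (n + 1)) = 1})
    (πs : Fin k → Fin kY)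
    (F : Fin k → Fin k → ℝ) (f : (ℕ → Fin k) → ℝ)
    (hf : ∀ x : ℕ → Fin k, f x = F (x 0) (x 1))
    (n : ℕ) (i : Fin k) (w : Fin (n+1) → Fin k) (y : ℕ → Fin kY) :
    tI X πs f (n+2) (Fin.cons i w : Fin (n+2) → Fin k) y =
      if πs i = y 0 then MC A F i (w 0) * tI X πs f (n+1) w (shift y) else 0 := by
  have hXmem : ∀ x, x ∈ X ↔ ∀ n : ℕ, A (x n) (x (n + 1)) = 1 := by rw [hXdef]; intro x; rfl
  have hdown : ∀ x : ℕ → Fin k,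
      (∀ j : Fin (n+2), x ↑j = (Fin.cons i w : Fin (n+2) → Fin k) j) →
      x 0 = i ∧ ∀ j : Fin (n+1), shift x ↑j = w j := by
    intro x hx
    refine ⟨by simpa using hx 0, fun j => ?_⟩
    have := hx j.succ
    simpa [shift] using this
  have hsh : ∀ x ∈ X, shift x ∈ X := by
    intro x hx; rw [hXmem] at hx ⊢; intro m; exact hx (m+1)
  have hA : (∃ x ∈ X, ∀ j : Fin (n+2), x ↑j = (Fin.cons i w : Fin (n+2) → Fin k) j) →
      A i (w 0) = 1 := by
    rintro ⟨x, hx, hxw⟩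
    obtain ⟨h1, h2⟩ := hdown x hxw
    have h3 := h2 0
    simp only [shift, Fin.val_zero] at h3
    have := (hXmem x).1 hx 0
    rw [h1, h3] at this
    exact this
  have hup : A i (w 0) = 1 → ∀ x ∈ X, (∀ j : Fin (n+1), x ↑j = w j) →
      consSeq i x ∈ X ∧ ∀ j : Fin (n+2), consSeq i x ↑j = (Fin.cons i w : Fin (n+2) → Fin k) j := by
    intro ha x hx hxw
    constructor
    · rw [hXmem] at hx ⊢
      intro m
      cases m with
      | zero => 
        have := hxw 0
        simp only [Fin.val_zero] at this
        simp only [consSeq]; rw [this]; exact ha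
      | succ m => exact hx m
    · intro j
      refine Fin.cases ?_ (fun j => ?_) j
      · simp [consSeq]
      · simpa [consSeq] using hxw j
  have hπ : (∀ j : Fin (n+2), πs ((Fin.cons i w : Fin (n+2) → Fin k) j) = y ↑j) ↔
      (πs i = y 0 ∧ ∀ j : Fin (n+1), πs (w j) = shift y ↑j) := by
    rw [Fin.forall_fin_succ]
    simp [shift]
  by_cases hπi : πs i = y 0
  · rw [if_pos hπi]
    by_cases ha : A i (w 0) = 1
    · have hM : MC A F i (w 0) = Real.exp (F i (w 0)) := by simp [MC, ha]
      rw [hM]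
      unfold tI
      have hiff : ((∃ x ∈ X, ∀ j : Fin (n+2), x ↑j = (Fin.cons i w : Fin (n+2) → Fin k) j) ∧
          ∀ j : Fin (n+2), πs ((Fin.cons i w : Fin (n+2) → Fin k) j) = y ↑j) ↔
          ((∃ x ∈ X, ∀ j : Fin (n+1), x ↑j = w j) ∧
            ∀ j : Fin (n+1), πs (w j) = shift y ↑j) := by
        rw [hπ]
        constructor
        · rintro ⟨⟨x, hx, hxw⟩, _, h2⟩
          exact ⟨⟨shift x, hsh x hx, (hdown x hxw).2⟩, h2⟩
        · rintro ⟨⟨x, hx, hxw⟩, h2⟩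
          exact ⟨⟨consSeq i x, hup ha x hx hxw⟩, hπi, h2⟩
      by_cases hc : ((∃ x ∈ X, ∀ j : Fin (n+1), x ↑j = w j) ∧
            ∀ j : Fin (n+1), πs (w j) = shift y ↑j)
      · rw [if_pos hc, if_pos (hiff.2 hc), Real.mul_iSup_of_nonneg (Real.exp_pos _).le]
        refine Function.Surjective.iSup_congr
          (fun x => ⟨shift x.1, hsh _ x.2.1, (hdown _ x.2.2).2⟩) ?_ ?_
        · rintro ⟨x, hx, hxw⟩
          exact ⟨⟨consSeq i x, hup ha x hx hxw⟩, rfl⟩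
        · rintro ⟨x, hx, hxw⟩
          obtain ⟨h1, h2⟩ := hdown x hxw
          have h3 := h2 0
          simp only [shift, Fin.val_zero] at h3
          simp only
          have hb : birk f (1 + (n+1)) x = F i (w 0) + birk f (n+1) (shift x) := by
            rw [birk_add]
            have h5 : birk f 1 x = F i (w 0) := by
              simp only [birk, Finset.sum_range_one, Function.iterate_zero, id]
              rw [hf, h1, h3]
            rw [h5]; rfl
          rw [← Real.exp_add, ← hb, show 1 + (n+1) = n + 2 by ring]
      · rw [if_neg hc, if_neg (fun h => hc (hiff.1 h)), mul_zero]
    · have hM : MC A F i (w 0) = 0 := by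
        rcases hA01 i (w 0) with h | h
        · simp [MC, h]
        · exact absurd h ha
      rw [hM, zero_mul]
      exact if_neg (fun h => ha (hA h.1))
  · rw [if_neg hπi]
    exact if_neg (fun h => hπi ((hπ.1 h.2).1))

theorem Gv_rec {k kY : ℕ} (A : Fin k → Fin k → ℕ) (hA01 : ∀ i j, A i j = 0 ∨ A i j = 1)
    (X : Set (ℕ → Fin k)) (hXdef : X = {x | ∀ n : ℕ, A (x n) (x (n + 1)) = 1})
    (πs : Fin k → Fin kY)
    (F : Fin k → Fin k → ℝ) (f : (ℕ → Fin k) → ℝ)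
    (hf : ∀ x : ℕ → Fin k, f x = F (x 0) (x 1))
    (n : ℕ) (i : Fin k) (y : ℕ → Fin kY) :
    Gv X πs f (n+1) y i = if πs i = y 0 then ∑ j, MC A F i j * Gv X πs f n (shift y) j else 0 := by
  unfold Gv
  rw [sum_cons]
  simp only [tI_rec A hA01 X hXdef πs F f hf, Fin.cons_zero]
  split_ifs with h
  · simp only [Finset.mul_sum]
  · simp

/-- path weights to the symbol `0` -/
def uV (M : Fin 3 → Fin 3 → ℝ) : ℕ → Fin 3 → ℝ
  | 0 => fun i => if i = 0 then 1 else 0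
  | (k+1) => fun i => if projC i = 1 then ∑ j, M i j * uV M k j else 0

/-- one more step -/
def TS (M : Fin 3 → Fin 3 → ℝ) (b : Fin 2) (v : Fin 3 → ℝ) : ℝ :=
  ∑ i, if projC i = b then ∑ j, M i j * v j else 0

/-- ratio -/
def rho (M : Fin 3 → Fin 3 → ℝ) (b : Fin 2) (k : ℕ) : ℝ :=
  TS M b (uV M k) / ∑ i, uV M k i

theorem projC0 : projC (0 : Fin 3) = 0 := by decide
theorem projC1 : projC (1 : Fin 3) = 1 := by decide
theorem projC2 : projC (2 : Fin 3) = 1 := by decide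
theorem projC_eq0 (i : Fin 3) : projC i = 0 ↔ i = 0 := by revert i; decide

theorem uV_succ (M : Fin 3 → Fin 3 → ℝ) (k : ℕ) (i : Fin 3) :
    uV M (k+1) i = if projC i = 1 then ∑ j, M i j * uV M k j else 0 := rfl

theorem uV_nonneg (M : Fin 3 → Fin 3 → ℝ) (hM : ∀ i j, 0 ≤ M i j) (k : ℕ) (i : Fin 3) :
    0 ≤ uV M k i := by
  induction k generalizing i with
  | zero => simp only [uV]; split_ifs <;> norm_num
  | succ k ih =>
    simp only [uV]
    split_ifs
    · exact Finset.sum_nonneg (fun j _ => mul_nonneg (hM i j) (ih j))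
    · exact le_rfl

theorem uV_s0 (M : Fin 3 → Fin 3 → ℝ) (k : ℕ) : uV M (k+1) 0 = 0 := by
  simp [uV, projC0]

theorem uV_s1 (M : Fin 3 → Fin 3 → ℝ) (k : ℕ) :
    uV M (k+1+1) 1 = M 1 1 * uV M (k+1) 1 + M 1 2 * uV M (k+1) 2 := by
  rw [uV_succ, if_pos projC1, Fin.sum_univ_three, uV_s0]; ring

theorem uV_s2 (M : Fin 3 → Fin 3 → ℝ) (k : ℕ) :
    uV M (k+1+1) 2 = M 2 1 * uV M (k+1) 1 + M 2 2 * uV M (k+1) 2 := by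
  rw [uV_succ, if_pos projC2, Fin.sum_univ_three, uV_s0]; ring

theorem rho_lim (M : Fin 3 → Fin 3 → ℝ) (hM : ∀ i j, 0 ≤ M i j)
    (ha : ∀ k, 0 < ∑ i, uV M k i) (hL : ∃ j, j ≠ 0 ∧ 0 < M 0 j)
    (htr : 0 < M 1 1 + M 2 2)
    (hin : ∀ i, i ≠ 0 → (∃ k, 0 < uV M k i) → ∃ h, h ≠ i ∧ 0 < M h i) :
    ∃ l : Fin 2 → ℝ, ∀ b, 0 < l b ∧ Tendsto (rho M b) atTop (𝓝 (l b)) := by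
  have hsum : ∀ k, ∑ i, uV M (k+1) i = uV M (k+1) 1 + uV M (k+1) 2 := by
    intro k; rw [Fin.sum_univ_three, uV_s0, zero_add]
  have hp1 : ∀ k, 0 < uV M (k+1) 1 + uV M (k+1) 2 := fun k => by rw [← hsum]; exact ha _
  obtain ⟨p, q, l, hp, hq, hpq, hl, tp, tq, e1, e2⟩ := proj_conv (M 1 1) (M 1 2) (M 2 1) (M 2 2)
    (hM _ _) (hM _ _) (hM _ _) (hM _ _) htr (fun k => uV M (k+1) 1) (fun k => uV M (k+1) 2)
    (fun k => uV_nonneg M hM _ _) (fun k => uV_nonneg M hM _ _) hp1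
    (fun k => uV_s1 M k) (fun k => uV_s2 M k)
  have r1 : Tendsto (rho M 1) atTop (𝓝 l) := by
    rw [← tendsto_add_atTop_iff_nat 1]
    have := ((tp.const_mul (M 1 1)).add (tq.const_mul (M 1 2))).add
      ((tp.const_mul (M 2 1)).add (tq.const_mul (M 2 2)))
    rw [e1, e2, ← mul_add, hpq, mul_one] at this
    refine this.congr (fun k => ?_)
    rw [rho, hsum, TS]
    simp only [Fin.sum_univ_three, projC0, projC1, projC2, uV_s0]
    simp
    ring
  have r0 : Tendsto (rho M 0) atTop (𝓝 (M 0 1 * p + M 0 2 * q)) := by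
    rw [← tendsto_add_atTop_iff_nat 1]
    refine ((tp.const_mul (M 0 1)).add (tq.const_mul (M 0 2))).congr (fun k => ?_)
    rw [rho, hsum, TS]
    simp only [Fin.sum_univ_three, projC0, projC1, projC2, uV_s0]
    simp
    ring
  have hpos0 : 0 < M 0 1 * p + M 0 2 * q := by
    by_contra hcon
    have h1 := mul_nonneg (hM 0 1) hp
    have h2 := mul_nonneg (hM 0 2) hq
    have h3 : M 0 1 * p = 0 := by linarith
    have h4 : M 0 2 * q = 0 := by linarith
    have n12 := mul_nonneg (hM 1 2) hq
    have n11 := mul_nonneg (hM 1 1) hp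
    have n21 := mul_nonneg (hM 2 1) hp
    have n22 := mul_nonneg (hM 2 2) hq
    have A1 : 0 < p → 0 < q := by
      intro hp'
      have m1 : M 0 1 = 0 := by
        rcases mul_eq_zero.1 h3 with h | h
        · exact h
        · linarith
      have hex : ∃ k, 0 < uV M k 1 := by
        by_contra hne
        push Not at hne
        have : p ≤ 0 := le_of_tendsto' tp (fun k =>
          div_nonpos_of_nonpos_of_nonneg (hne _) (hp1 k).le)
        linarith
      obtain ⟨h, hh, hh'⟩ := hin 1 (by decide) hex
      fin_cases h
      · simp [m1] at hh'
      · simp at hh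
      · simp at hh'
        have : 0 < l * q := by rw [← e2]; have := mul_pos hh' hp'; linarith
        exact (mul_pos_iff_of_pos_left hl).1 this
    have A2 : 0 < q → 0 < p := by
      intro hp'
      have m1 : M 0 2 = 0 := by
        rcases mul_eq_zero.1 h4 with h | h
        · exact h
        · linarith
      have hex : ∃ k, 0 < uV M k 2 := by
        by_contra hne
        push Not at hne
        have : q ≤ 0 := le_of_tendsto' tq (fun k =>
          div_nonpos_of_nonpos_of_nonneg (hne _) (hp1 k).le)
        linarith
      obtain ⟨h, hh, hh'⟩ := hin 2 (by decide) hex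
      fin_cases h
      · simp [m1] at hh'
      · simp at hh'
        have : 0 < l * p := by rw [← e1]; have := mul_pos hh' hp'; linarith
        exact (mul_pos_iff_of_pos_left hl).1 this
      · simp at hh
    have hpp : 0 < p ∧ 0 < q := by
      rcases hp.eq_or_lt with h | h
      · have : 0 < q := by linarith
        exact ⟨A2 this, this⟩
      · exact ⟨h, A1 h⟩
    obtain ⟨j, hj, hj'⟩ := hL
    have m1 : M 0 1 = 0 := (mul_eq_zero.1 h3).resolve_right hpp.1.ne'
    have m2 : M 0 2 = 0 := (mul_eq_zero.1 h4).resolve_right hpp.2.ne'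
    fin_cases j
    · simp at hj
    · simp [m1] at hj'
    · simp [m2] at hj'
  refine ⟨fun b => if b = 0 then M 0 1 * p + M 0 2 * q else l, fun b => ?_⟩
  fin_cases b
  · simpa using ⟨hpos0, r0⟩
  · simpa using ⟨hl, r1⟩

/-- the potential on Y -/
def gh (M : Fin 3 → Fin 3 → ℝ) (l : Fin 2 → ℝ) (y : ℕ → Fin 2) : ℝ :=
  if h : ∃ k, y (k+1) = 0 then Real.log (rho M (y 0) (Nat.find h)) else Real.log (l (y 0))

theorem gh_of (M : Fin 3 → Fin 3 → ℝ) (l : Fin 2 → ℝ) (y : ℕ → Fin 2) (k : ℕ)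
    (hk : y (k+1) = 0) (hk' : ∀ j < k, y (j+1) ≠ 0) : gh M l y = Real.log (rho M (y 0) k) := by
  have h : ∃ k, y (k+1) = 0 := ⟨k, hk⟩
  rw [gh, dif_pos h, (Nat.find_eq_iff h).2 ⟨hk, fun j hj => hk' j hj⟩]

theorem nhds_res {k : ℕ} (n : ℕ) (y : ℕ → Fin k) : ∀ᶠ z in 𝓝 y, ∀ i < n, z i = y i := by
  have hc : Continuous (resn n : (ℕ → Fin k) → _) :=
    continuous_pi (fun i => continuous_apply _)
  have : resn n ⁻¹' {resn n y} ∈ 𝓝 y :=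
    ((isOpen_discrete {resn n y}).preimage hc).mem_nhds rfl
  filter_upwards [this] with z hz i hi
  exact congrFun hz ⟨i, hi⟩

theorem gh_cont (M : Fin 3 → Fin 3 → ℝ) (l : Fin 2 → ℝ)
    (hl : ∀ b, 0 < l b ∧ Tendsto (rho M b) atTop (𝓝 (l b))) : Continuous (gh M l) := by
  rw [continuous_iff_continuousAt]
  intro y
  by_cases h : ∃ k, y (k+1) = 0
  · have hk := Nat.find_spec h
    have hk' : ∀ j < Nat.find h, y (j+1) ≠ 0 := fun j hj => Nat.find_min h hj
    set k := Nat.find h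
    have : gh M l =ᶠ[𝓝 y] fun _ => gh M l y := by
      filter_upwards [nhds_res (k+2) y] with z hz
      rw [gh_of M l y k hk hk', gh_of M l z k (by rw [hz _ (by omega)]; exact hk)
        (fun j hj => by rw [hz _ (by omega)]; exact hk' j hj), hz 0 (by omega)]
    exact (continuousAt_congr this).2 continuousAt_const
  · have e : gh M l y = Real.log (l (y 0)) := dif_neg h
    have ht := ((Real.continuousAt_log (hl (y 0)).1.ne').tendsto.comp (hl (y 0)).2)
    rw [ContinuousAt, e, Metric.tendsto_nhds]
    intro ε hε
    rw [Metric.tendsto_nhds] at ht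
    obtain ⟨K, hK⟩ := eventually_atTop.1 (ht ε hε)
    filter_upwards [nhds_res (K+1) y] with z hz
    by_cases h' : ∃ k, z (k+1) = 0
    · rw [gh, dif_pos h', hz 0 (by omega)]
      apply hK
      by_contra hlt
      have := Nat.find_spec h'
      rw [hz _ (by omega)] at this
      exact h ⟨_, this⟩
    · rw [gh, dif_neg h', hz 0 (by omega), dist_self]; exact hε

section
variable (A : Fin 3 → Fin 3 → ℕ) (hA01 : ∀ i j, A i j = 0 ∨ A i j = 1)
    (X : Set (ℕ → Fin 3)) (hXdef : X = {x | ∀ n : ℕ, A (x n) (x (n + 1)) = 1})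
    (F : Fin 3 → Fin 3 → ℝ) (f : (ℕ → Fin 3) → ℝ)
    (hf : ∀ x : ℕ → Fin 3, f x = F (x 0) (x 1))

theorem Gv_zero (n : ℕ) (y : ℕ → Fin 2) (i : Fin 3) (h : projC i ≠ y 0) :
    Gv X projC f n y i = 0 := by
  unfold Gv
  apply Finset.sum_eq_zero
  intro u _
  exact if_neg (fun hc => h (by simpa using hc.2 0))

theorem Gv_fact (hA01 : ∀ i j, A i j = 0 ∨ A i j = 1)
    (hXdef : X = {x | ∀ n : ℕ, A (x n) (x (n + 1)) = 1})
    (hf : ∀ x : ℕ → Fin 3, f x = F (x 0) (x 1))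
    (k n : ℕ) (y : ℕ → Fin 2) (hk : y k = 0) (hk' : ∀ j < k, y j ≠ 0) (i : Fin 3) :
    Gv X projC f (n + k) y i = Gv X projC f n (shift^[k] y) 0 * uV (MC A F) k i := by
  induction k generalizing y i with
  | zero =>
    simp only [uV, Function.iterate_zero, id, add_zero]
    by_cases hi : i = 0
    · subst hi; simp
    · rw [if_neg hi, mul_zero]
      apply Gv_zero
      rw [hk]; exact fun h => hi ((projC_eq0 i).1 h)
  | succ k ih =>
    have hy0 : y 0 = 1 := by
      have := hk' 0 (by omega)
      revert this; generalize y 0 = b; revert b; decide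
    rw [← add_assoc, Gv_rec A hA01 X hXdef projC F f hf, uV_succ, hy0]
    split_ifs
    · rw [Finset.mul_sum]
      apply Finset.sum_congr rfl
      intro j _
      rw [ih (shift y) hk (fun j hj => hk' (j+1) (by omega)) j, Function.iterate_succ_apply]
      ring
    · simp

theorem ratio (hA01 : ∀ i j, A i j = 0 ∨ A i j = 1)
    (hXdef : X = {x | ∀ n : ℕ, A (x n) (x (n + 1)) = 1})
    (hf : ∀ x : ℕ → Fin 3, f x = F (x 0) (x 1)) (l : Fin 2 → ℝ)
    (k m : ℕ) (hm : k + 1 ≤ m) (y : ℕ → Fin 2) (hk : y (k+1) = 0) (hk' : ∀ j < k, y (j+1) ≠ 0)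
    (h1 : 0 < gseq X projC f (m+1) y) (h2 : 0 < gseq X projC f m (shift y)) :
    gh (MC A F) l y = Real.log (gseq X projC f (m+1) y) - Real.log (gseq X projC f m (shift y)) := by
  obtain ⟨n, rfl⟩ : ∃ n, m = n + k + 1 := ⟨m - (k+1), by omega⟩
  rw [gh_of _ _ _ k hk hk', ← Real.log_div h1.ne' h2.ne']
  congr 1
  have e2 : gseq X projC f (n + k + 1) (shift y) = Gv X projC f n (shift^[k] (shift y)) 0 *
      ∑ i, uV (MC A F) k i := by
    rw [gseq_Gv, Finset.mul_sum]
    apply Finset.sum_congr rfl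
    intro i _
    exact Gv_fact A X F f hA01 hXdef hf k n (shift y) hk hk' i
  have e1 : gseq X projC f (n + k + 1 + 1) y = Gv X projC f n (shift^[k] (shift y)) 0 *
      TS (MC A F) (y 0) (uV (MC A F) k) := by
    rw [gseq_Gv, TS, Finset.mul_sum]
    apply Finset.sum_congr rfl
    intro i _
    rw [Gv_rec A hA01 X hXdef projC F f hf]
    split_ifs
    · rw [Finset.mul_sum]
      apply Finset.sum_congr rfl
      intro j _
      rw [Gv_fact A X F f hA01 hXdef hf k n (shift y) hk hk' j]; ring
    · simp
  rw [e2] at h2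
  rw [e1, e2, rho, mul_div_mul_left]
  intro h0
  rw [h0] at h2; simp at h2

theorem uV_path (hXdef : X = {x | ∀ n : ℕ, A (x n) (x (n + 1)) = 1})
    (k : ℕ) (x : ℕ → Fin 3) (hx : x ∈ X) (hk : x k = 0) (hk' : ∀ j < k, x j ≠ 0) :
    0 < uV (MC A F) k (x 0) := by
  have hM : ∀ i j, 0 ≤ MC A F i j := fun i j => by unfold MC; positivity
  induction k generalizing x with
  | zero => simp [uV, hk]
  | succ k ih =>
    have h0 : projC (x 0) = 1 := by
      have := hk' 0 (by omega)
      revert this; generalize x 0 = b; revert b; decide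
    rw [uV_succ, if_pos h0]
    have hsx : shift x ∈ X := by
      rw [hXdef] at hx ⊢; intro m; exact hx (m+1)
    have h1 := ih (shift x) hsx hk (fun j hj => hk' (j+1) (by omega))
    refine lt_of_lt_of_le ?_ (Finset.single_le_sum
      (fun j _ => mul_nonneg (hM (x 0) j) (uV_nonneg _ hM k j)) (Finset.mem_univ (shift x 0)))
    apply mul_pos _ h1
    rw [hXdef] at hx
    have := hx 0
    simp only [MC, shift]
    rw [this]; simp [Real.exp_pos]

theorem uV_ess (hA01 : ∀ i j, A i j = 0 ∨ A i j = 1)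
    (hXdef : X = {x | ∀ n : ℕ, A (x n) (x (n + 1)) = 1})
    (h0 : ∃ x ∈ X, x 0 = 0) (k : ℕ) (i : Fin 3) (h : 0 < uV (MC A F) k i) :
    ∃ x ∈ X, x 0 = i := by
  have hM : ∀ i j, 0 ≤ MC A F i j := fun i j => by unfold MC; positivity
  induction k generalizing i with
  | zero =>
    simp only [uV] at h
    split_ifs at h with hi
    · rw [hi]; exact h0
    · simp at h
  | succ k ih =>
    rw [uV_succ] at h
    split_ifs at h with hi
    · obtain ⟨j, _, hj⟩ := Finset.exists_lt_of_sum_lt (s := Finset.univ) (f := fun _ => (0:ℝ))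
        (g := fun j => MC A F i j * uV (MC A F) k j) (by simpa using h)
      have hj2 : 0 < uV (MC A F) k j := by
        rcases (uV_nonneg _ hM k j).eq_or_lt with h | h
        · rw [← h] at hj; simp at hj
        · exact h
      have hj1 : A i j = 1 := by
        rcases hA01 i j with h | h
        · simp [MC, h] at hj
        · exact h
      obtain ⟨x, hx, hxj⟩ := ih j hj2
      refine ⟨consSeq i x, ?_, rfl⟩
      rw [hXdef] at hx ⊢
      intro m
      cases m with
      | zero => simp only [consSeq]; rw [hxj]; exact hj1
      | succ m => exact hx m
    · simp at h

theorem lim_exists (hA01 : ∀ i j, A i j = 0 ∨ A i j = 1)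
    (hXdef : X = {x | ∀ n : ℕ, A (x n) (x (n + 1)) = 1})
    (hXirr : IrreducibleShift X)
    (Y : Set (ℕ → Fin 2))
    (hYdef : Y = Set.univ ∨ Y = {y | ∀ n : ℕ, ¬(y n = 0 ∧ y (n + 1) = 0)})
    (hsurj : (fun x => (projC (l := 3)) ∘ x) '' X = Y)
    (hMsub : ¬ ∃ a₁ a₂ : ℝ, 0 < a₁ ∧ 0 < a₂ ∧
      (Matrix.of fun i j : Fin 2 => MC A F i.succ j.succ) = !![(0 : ℝ), a₁; a₂, 0]) :
    ∃ l : Fin 2 → ℝ, ∀ b, 0 < l b ∧ Tendsto (rho (MC A F) b) atTop (𝓝 (l b)) := by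
  have hM : ∀ i j, 0 ≤ MC A F i j := fun i j => by unfold MC; positivity
  have hMA : ∀ i j, A i j = 1 → 0 < MC A F i j := by
    intro i j h; simp [MC, h, Real.exp_pos]
  have hpt : ∀ k : ℕ, ∃ x ∈ X, x k = 0 ∧ ∀ j, j ≠ k → x j ≠ 0 := by
    intro k
    have hy : (fun i : ℕ => if i = k then (0 : Fin 2) else 1) ∈ Y := by
      rcases hYdef with h | h
      · rw [h]; trivial
      · rw [h]
        intro n
        rintro ⟨h1, h2⟩
        have e1 : n = k := by by_contra hne; simp [hne] at h1
        have e2 : n + 1 = k := by by_contra hne; simp [hne] at h2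
        omega
    rw [← hsurj] at hy
    obtain ⟨x, hx, hxy⟩ := hy
    refine ⟨x, hx, ?_, ?_⟩
    · have := congrFun hxy k
      simp only [Function.comp, if_true] at this
      exact (projC_eq0 _).1 this
    · intro j hj h0
      have := congrFun hxy j
      simp [Function.comp, h0, projC0, hj] at this
  have ha : ∀ k, 0 < ∑ i, uV (MC A F) k i := by
    intro k
    obtain ⟨x, hx, hx1, hx2⟩ := hpt k
    exact lt_of_lt_of_le (uV_path A X F hXdef k x hx hx1 (fun j hj => hx2 j (by omega)))
      (Finset.single_le_sum (fun j _ => uV_nonneg _ hM k j) (Finset.mem_univ (x 0)))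
  obtain ⟨x₀, hx₀, hx₀0, hx₀1⟩ := hpt 0
  have hXm : ∀ x ∈ X, ∀ n : ℕ, A (x n) (x (n + 1)) = 1 := by
    intro x hx; rw [hXdef] at hx; exact hx
  apply rho_lim _ hM ha
  · refine ⟨x₀ 1, hx₀1 1 (by omega), ?_⟩
    have := hXm x₀ hx₀ 0
    rw [hx₀0] at this
    exact hMA _ _ this
  · by_contra hcon
    have h1 := hM 1 1
    have h2 := hM 2 2
    have e1 : MC A F 1 1 = 0 := by linarith
    have e2 : MC A F 2 2 = 0 := by linarith
    have h3 : ¬ (0 < MC A F 1 2 ∧ 0 < MC A F 2 1) := by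
      rintro ⟨h3, h4⟩
      apply hMsub
      refine ⟨_, _, h3, h4, ?_⟩
      ext i j
      fin_cases i <;> fin_cases j <;> simp [e1, e2]
    have h4 : MC A F 1 2 * MC A F 2 1 = 0 := by
      by_contra hne
      have h5 : MC A F 1 2 ≠ 0 := fun h => hne (by rw [h, zero_mul])
      have h6 : MC A F 2 1 ≠ 0 := fun h => hne (by rw [h, mul_zero])
      exact h3 ⟨lt_of_le_of_ne (hM _ _) h5.symm, lt_of_le_of_ne (hM _ _) h6.symm⟩
    have h5 := ha 3
    rw [Fin.sum_univ_three, uV_s0 _ 2, uV_s1 _ 1, uV_s2 _ 1, uV_s1 _ 0, uV_s2 _ 0, e1, e2] at h5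
    have h6 : (0:ℝ) + (0 * (0 * uV (MC A F) (0+1) 1 + MC A F 1 2 * uV (MC A F) (0+1) 2) +
        MC A F 1 2 * (MC A F 2 1 * uV (MC A F) (0+1) 1 + 0 * uV (MC A F) (0+1) 2)) +
        (MC A F 2 1 * (0 * uV (MC A F) (0+1) 1 + MC A F 1 2 * uV (MC A F) (0+1) 2) +
        0 * (MC A F 2 1 * uV (MC A F) (0+1) 1 + 0 * uV (MC A F) (0+1) 2)) =
        (MC A F 1 2 * MC A F 2 1) * (uV (MC A F) (0+1) 1 + uV (MC A F) (0+1) 2) := by ring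
    rw [h6, h4, zero_mul] at h5
    exact lt_irrefl _ h5
  · rintro i hi ⟨k, hk⟩
    obtain ⟨x, hx, hxi⟩ := uV_ess A X F hA01 hXdef ⟨x₀, hx₀, hx₀0⟩ k i hk
    obtain ⟨p, hp⟩ := conn A X hXdef hXirr
    obtain ⟨L, _, z, hz, hz1, hz2⟩ := hp x₀ hx₀ x hx 1 le_rfl
    by_contra hcon
    push Not at hcon
    have hne : ∀ t, z t ≠ i := by
      intro t
      induction t with
      | zero => rw [hz1 0 (by omega), hx₀0]; exact fun h => hi h.symm
      | succ t ih =>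
        intro h
        have := hMA _ _ (hXm z hz t)
        rw [h] at this
        exact absurd this (not_lt.2 (hcon _ ih))
    apply hne (1 + L)
    have := congrFun hz2 0
    rw [shift_iter, hxi] at this
    exact this

end

theorem cmp_words {k : ℕ} (Y : Set (ℕ → Fin k)) (hYm : MeasurableSet Y) (ν m : Measure (ℕ → Fin k))
    [IsProbabilityMeasure ν] (hνY : ν Y = 1) (n : ℕ) (a : ℝ) (ha : 0 ≤ a)
    (h : ∀ y ∈ Y, ν.real (resn n ⁻¹' {resn n y}) ≤ a * m.real (resn n ⁻¹' {resn n y}))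
    (u : Fin n → Fin k) : ν.real (resn n ⁻¹' {u}) ≤ a * m.real (resn n ⁻¹' {u}) := by
  by_cases hu : ∃ y ∈ Y, resn n y = u
  · obtain ⟨y, hy, rfl⟩ := hu
    exact h y hy
  · have : ν (resn n ⁻¹' {u}) = 0 := by
      refine measure_mono_null ?_ ((prob_compl_eq_zero_iff hYm).2 hνY)
      intro y hy hyY
      exact hu ⟨y, hyY, hy⟩
    rw [measureReal_def, this, ENNReal.toReal_zero]
    exact mul_nonneg ha measureReal_nonneg

theorem weak_cmp {k : ℕ} (Y : Set (ℕ → Fin k)) (hYm : MeasurableSet Y) (g : (ℕ → Fin k) → ℝ)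
    (ν m : Measure (ℕ → Fin k)) [IsProbabilityMeasure ν] [IsProbabilityMeasure m]
    (hνY : ν Y = 1) (hmY : m Y = 1) (P Q : ℝ) (C D : ℕ → ℝ)
    (hC : ∀ n : ℕ, 1 ≤ n → 0 < C n) (hD : ∀ n : ℕ, 1 ≤ n → 0 < D n)
    (hCl : Tendsto (fun n : ℕ => Real.log (C n) / n) atTop (𝓝 0))
    (hDl : Tendsto (fun n : ℕ => Real.log (D n) / n) atTop (𝓝 0))
    (h1 : ∀ x ∈ Y, ∀ n : ℕ, 1 ≤ n →
      (C n)⁻¹ ≤ (m (cyl Y x n)).toReal / (Real.exp (-(n : ℝ) * P) * Real.exp (birk g n x)))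
    (h2 : ∀ x ∈ Y, ∀ n : ℕ, 1 ≤ n →
      (ν (cyl Y x n)).toReal / (Real.exp (-(n : ℝ) * Q) * Real.exp (birk g n x)) ≤ D n) :
    (∀ n, 1 ≤ n → ∀ u : Fin n → Fin k, ν.real (resn n ⁻¹' {u}) ≤
      Real.exp (Real.log (C n) + Real.log (D n) + n * (P - Q)) * m.real (resn n ⁻¹' {u})) ∧
    Q ≤ P := by
  have key : ∀ n, 1 ≤ n → ∀ u : Fin n → Fin k, ν.real (resn n ⁻¹' {u}) ≤
      Real.exp (Real.log (C n) + Real.log (D n) + n * (P - Q)) * m.real (resn n ⁻¹' {u}) := by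
    intro n hn
    refine cmp_words Y hYm ν m hνY n _ (Real.exp_pos _).le ?_
    intro y hy
    have a1 := h1 y hy n hn
    have a2 := h2 y hy n hn
    rw [meas_cyl Y hYm m hmY, ← measureReal_def, ← Real.exp_add,
      le_div_iff₀ (Real.exp_pos _), inv_mul_le_iff₀ (hC n hn)] at a1
    rw [meas_cyl Y hYm ν hνY, ← measureReal_def, ← Real.exp_add,
      div_le_iff₀ (Real.exp_pos _)] at a2
    refine a2.trans ?_
    have e : Real.exp (-(n : ℝ) * Q + birk g n y) =
      Real.exp (n * (P - Q)) * Real.exp (-(n:ℝ) * P + birk g n y) := by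
      rw [← Real.exp_add]; congr 1; ring
    rw [e, Real.exp_add (_ + _) ((n:ℝ) * (P - Q)), Real.exp_add (Real.log (C n)), Real.exp_log (hC n hn), Real.exp_log (hD n hn)]
    have := mul_le_mul_of_nonneg_left a1
      (mul_pos (hD n hn) (Real.exp_pos (n * (P - Q)))).le
    linarith
  refine ⟨key, ?_⟩
  have hs : ∀ n, 1 ≤ n → 0 ≤ Real.log (C n) + Real.log (D n) + n * (P - Q) := by
    intro n hn
    have := Finset.sum_le_sum (fun (u : Fin n → Fin k) (_ : u ∈ Finset.univ) => key n hn u)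
    rw [← Finset.mul_sum] at this
    have s1 := sum_slices ν Set.univ (resn n) (measurable_resn n)
    have s2 := sum_slices m Set.univ (resn n) (measurable_resn n)
    simp only [Set.inter_univ, probReal_univ] at s1 s2
    rw [s1, s2, mul_one] at this
    exact Real.one_le_exp_iff.1 this
  have hlim : Tendsto (fun n : ℕ => Real.log (C n) / n + Real.log (D n) / n + (P - Q)) atTop
      (𝓝 (0 + 0 + (P - Q))) := (hCl.add hDl).add_const _
  have := ge_of_tendsto hlim (b := 0) (by
    filter_upwards [eventually_ge_atTop 1] with n hn
    have hn' : (0:ℝ) < n := by exact_mod_cast hn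
    have e : Real.log (C n) / n + Real.log (D n) / n + (P - Q) =
      (Real.log (C n) + Real.log (D n) + n * (P - Q)) / n := by field_simp
    rw [e]; exact div_nonneg (hs n hn) hn'.le)
  linarith

theorem unique_weak {k : ℕ} (Y : Set (ℕ → Fin k)) (hYm : MeasurableSet Y) (g : (ℕ → Fin k) → ℝ)
    (ν m : Measure (ℕ → Fin k)) (hν : IsInvariantOn ν Y) (hm : IsInvariantOn m Y)
    (hE : Ergodic shift m) (K : ℝ) (hK : 0 < K)
    (hsub : ∀ n l, 1 ≤ n → 1 ≤ l → ∀ (u : Fin n → Fin k) (v : Fin l → Fin k),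
      m.real (resn (n+l) ⁻¹' {Fin.append u v}) ≤
        K * (m.real (resn n ⁻¹' {u}) * m.real (resn l ⁻¹' {v})))
    (hmG : WeakGibbsFun Y g m) (hνG : WeakGibbsFun Y g ν) : ν = m := by
  obtain ⟨i1, hνY, hνi⟩ := hν
  obtain ⟨i2, hmY, hmi⟩ := hm
  obtain ⟨P, C, hC, hCl, hm1⟩ := hmG
  obtain ⟨Q, D, hD, hDl, hν1⟩ := hνG
  obtain ⟨r1, r2⟩ := weak_cmp Y hYm g ν m hνY hmY P Q C D hC hD hCl hDl
    (fun x hx n hn => (hm1 x hx n hn).1) (fun x hx n hn => (hν1 x hx n hn).2)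
  obtain ⟨_, r3⟩ := weak_cmp Y hYm g m ν hmY hνY Q P D C hD hC hDl hCl
    (fun x hx n hn => (hν1 x hx n hn).1) (fun x hx n hn => (hm1 x hx n hn).2)
  have hPQ : P = Q := le_antisymm r3 r2
  subst hPQ
  have hac : ν ≪ m := by
    refine ac_of_subexp ν m hνi K hK hsub (fun n => Real.log (C n) + Real.log (D n)) ?_ ?_
    · have := hCl.add hDl
      simp only [add_zero] at this
      refine this.congr (fun n => ?_)
      ring
    · intro n hn u
      have := r1 n hn u
      simpa using this
  refine hE.eq_of_absolutelyContinuous ⟨measurable_shift', ?_⟩ hac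
  ext B hB
  rw [Measure.map_apply measurable_shift' hB, hνi B hB]

theorem weak_of_gibbs {k : ℕ} (Y : Set (ℕ → Fin k)) (g : (ℕ → Fin k) → ℝ)
    (ν : Measure (ℕ → Fin k)) (h : GibbsFun Y g ν) : WeakGibbsFun Y g ν := by
  obtain ⟨P, C, hC, h⟩ := h
  exact ⟨P, fun _ => C, fun _ _ => hC, tendsto_const_div_atTop_nhds_zero_nat _, h⟩

theorem birk_tail (A : Fin 3 → Fin 3 → ℕ) (hA01 : ∀ i j, A i j = 0 ∨ A i j = 1)
    (X : Set (ℕ → Fin 3)) (hXdef : X = {x | ∀ n : ℕ, A (x n) (x (n + 1)) = 1})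
    (F : Fin 3 → Fin 3 → ℝ) (f : (ℕ → Fin 3) → ℝ)
    (hf : ∀ x : ℕ → Fin 3, f x = F (x 0) (x 1)) (l : Fin 2 → ℝ)
    (Y : Set (ℕ → Fin 2)) (hYs : ∀ y ∈ Y, shift y ∈ Y)
    (hpos : ∀ y ∈ Y, ∀ n, 0 < gseq X projC f n y) (n : ℕ) :
    ∀ z ∈ Y, (∀ N, ∃ j ≥ N, z j = 0) → ∃ m0, ∀ m ≥ m0,
    birk (gh (MC A F) l) n z = Real.log (gseq X projC f (n + m) z) -
      Real.log (gseq X projC f m (shift^[n] z)) := by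
  induction n with
  | zero => intro z _ _; exact ⟨0, fun m _ => by simp [birk]⟩
  | succ n ih =>
    intro z hz hN
    obtain ⟨m0, hm0⟩ := ih (shift z) (hYs z hz) (fun N => by
      obtain ⟨j, hj, hj0⟩ := hN (N+1)
      refine ⟨j - 1, by omega, ?_⟩
      simp only [shift]
      rw [Nat.sub_add_cancel (by omega)]; exact hj0)
    have h : ∃ k, z (k+1) = 0 := by
      obtain ⟨j, hj, hj0⟩ := hN 1
      exact ⟨j - 1, by rw [Nat.sub_add_cancel (by omega)]; exact hj0⟩
    refine ⟨max m0 (Nat.find h + 1), fun m hm => ?_⟩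
    have e := birk_add (gh (MC A F) l) 1 n z
    have e1 : birk (gh (MC A F) l) 1 z = gh (MC A F) l z := by simp [birk]
    rw [add_comm 1 n, e1, Function.iterate_one, hm0 m ((le_max_left _ _).trans hm),
      ratio A X F f hA01 hXdef hf l (Nat.find h) (n+m)
        (by have := (le_max_right m0 (Nat.find h + 1)).trans hm; omega) z (Nat.find_spec h)
        (fun j hj => Nat.find_min h hj) (hpos _ hz _) (hpos _ (hYs z hz) _)] at e
    rw [e, Function.iterate_succ_apply, show n + 1 + m = n + m + 1 by omega]
    ring

theorem cont_birk (g : (ℕ → Fin 2) → ℝ) (hg : Continuous g) (n : ℕ) : Continuous (birk g n) := by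
  unfold birk
  refine continuous_finsetSum _ (fun i _ => hg.comp ?_)
  have : Continuous (shift : (ℕ → Fin 2) → _) := continuous_pi (fun i => continuous_apply _)
  exact this.iterate i

theorem birk_bound (A : Fin 3 → Fin 3 → ℕ) (hA01 : ∀ i j, A i j = 0 ∨ A i j = 1)
    (X : Set (ℕ → Fin 3)) (hXdef : X = {x | ∀ n : ℕ, A (x n) (x (n + 1)) = 1})
    (F : Fin 3 → Fin 3 → ℝ) (f : (ℕ → Fin 3) → ℝ)
    (hf : ∀ x : ℕ → Fin 3, f x = F (x 0) (x 1)) (l : Fin 2 → ℝ)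
    (hl : ∀ b, 0 < l b ∧ Tendsto (rho (MC A F) b) atTop (𝓝 (l b)))
    (Y : Set (ℕ → Fin 2)) (hYs : ∀ y ∈ Y, shift y ∈ Y)
    (hYdef : Y = Set.univ ∨ Y = {y | ∀ n : ℕ, ¬(y n = 0 ∧ y (n + 1) = 0)})
    (hpos : ∀ y ∈ Y, ∀ n, 0 < gseq X projC f n y) (n : ℕ) (c : ℝ)
    (hc : ∀ y ∈ Y, ∀ m, 1 ≤ m →
      Real.exp (-c) * (gseq X projC f n y * gseq X projC f m (shift^[n] y)) ≤
        gseq X projC f (n + m) y ∧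
      gseq X projC f (n + m) y ≤
        Real.exp c * (gseq X projC f n y * gseq X projC f m (shift^[n] y))) :
    ∀ y ∈ Y, |birk (gh (MC A F) l) n y - Real.log (gseq X projC f n y)| ≤ c := by
  have hYn : ∀ j, ∀ y ∈ Y, shift^[j] y ∈ Y := by
    intro j
    induction j with
    | zero => intro y hy; exact hy
    | succ j ih => intro y hy; rw [Function.iterate_succ_apply]; exact ih _ (hYs y hy)
  have h1 : ∀ z ∈ Y, (∀ N, ∃ j ≥ N, z j = 0) →
      |birk (gh (MC A F) l) n z - Real.log (gseq X projC f n z)| ≤ c := by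
    intro z hz hN
    obtain ⟨m0, hm0⟩ := birk_tail A hA01 X hXdef F f hf l Y hYs hpos n z hz hN
    obtain ⟨b1, b2⟩ := hc z hz (m0+1) (by omega)
    rw [hm0 (m0+1) (by omega)]
    have p1 := hpos z hz n
    have p2 := hpos _ (hYn n z hz) (m0+1)
    have p3 := hpos z hz (n + (m0+1))
    have l1 := Real.log_le_log (by positivity) b1
    have l2 := Real.log_le_log p3 b2
    rw [Real.log_mul (Real.exp_pos _).ne' (by positivity), Real.log_mul p1.ne' p2.ne',
      Real.log_exp] at l1 l2
    rw [abs_le]; constructor <;> linarith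
  intro y hy
  let z : ℕ → ℕ → Fin 2 := fun K i => if i < K then y i else if (i - K) % 2 = 0 then 1 else 0
  have hz1 : ∀ K, ∀ i < K, z K i = y i := fun K i hi => by simp only [z]; rw [if_pos hi]
  have hzY : ∀ K, z K ∈ Y := by
    intro K
    rcases hYdef with h | h
    · rw [h]; trivial
    · rw [h] at hy ⊢
      rintro j ⟨q1, q2⟩
      simp only [z] at q1 q2
      by_cases c1 : j + 1 < K
      · rw [if_pos c1] at q2
        rw [if_pos (by omega)] at q1
        exact hy j ⟨q1, q2⟩
      · rw [if_neg c1] at q2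
        by_cases c2 : j < K
        · rw [if_pos (by omega)] at q2
          exact absurd q2 (by decide)
        · rw [if_neg c2] at q1
          by_cases c3 : (j - K) % 2 = 0
          · rw [if_pos c3] at q1; exact absurd q1 (by decide)
          · rw [if_pos (by omega)] at q2; exact absurd q2 (by decide)
  have hzN : ∀ K N, ∃ j ≥ N, z K j = 0 := by
    intro K N
    refine ⟨K + 2 * N + 1, by omega, ?_⟩
    simp only [z]
    rw [if_neg (by omega), if_neg (by omega)]
  have hlim : Tendsto z atTop (𝓝 y) := by
    rw [tendsto_pi_nhds]
    intro i
    refine tendsto_const_nhds.congr' ?_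
    filter_upwards [eventually_gt_atTop i] with K hK
    exact (hz1 K i hK).symm
  have hlim2 : Tendsto (fun K => |birk (gh (MC A F) l) n (z K) - Real.log (gseq X projC f n y)|)
      atTop (𝓝 |birk (gh (MC A F) l) n y - Real.log (gseq X projC f n y)|) :=
    ((((cont_birk _ (gh_cont _ l hl) n).tendsto y).comp hlim).sub_const _).abs
  refine le_of_tendsto hlim2 ?_
  filter_upwards [eventually_ge_atTop n] with K hK
  rw [gseq_congr X projC f n y (z K) (fun i hi => (hz1 K i (by omega)).symm)]
  exact h1 _ (hzY K) (hzN K)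

theorem gibbs_conv (t E g b c C : ℝ) (hE : 0 < E) (hg : 0 < g) (hC : 0 < C)
    (h1 : C⁻¹ * (E * g) ≤ t) (h2 : t ≤ C * (E * g)) (h : |b - Real.log g| ≤ c) :
    (C * Real.exp c)⁻¹ ≤ t / (E * Real.exp b) ∧ t / (E * Real.exp b) ≤ C * Real.exp c := by
  obtain ⟨a1, a2⟩ := abs_le.1 h
  have e1 : g ≤ Real.exp c * Real.exp b := by
    rw [← Real.exp_add, ← Real.exp_log hg]; apply Real.exp_le_exp.2; linarith
  have e2 : Real.exp b ≤ Real.exp c * g := by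
    rw [← Real.exp_log hg, ← Real.exp_add]; apply Real.exp_le_exp.2; linarith
  have hp : 0 < E * Real.exp b := mul_pos hE (Real.exp_pos _)
  constructor
  · rw [le_div_iff₀ hp, inv_mul_le_iff₀ (by positivity)]
    rw [inv_mul_le_iff₀ hC] at h1
    have := mul_le_mul_of_nonneg_left e2 hE.le
    have h3 := mul_le_mul_of_nonneg_left h1 (Real.exp_pos c).le
    linarith
  · rw [div_le_iff₀ hp]
    have := mul_le_mul_of_nonneg_left e1 (mul_pos hC hE).le
    linarith

theorem gibbs_log (t P b g C D Q n : ℝ) (hg : 0 < g) (hC : 0 < C) (hD : 0 < D)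
    (h1 : C⁻¹ * (Real.exp (-n * P) * g) ≤ t) (h2 : t ≤ C * (Real.exp (-n * P) * g))
    (h3 : D⁻¹ ≤ t / (Real.exp (-n * Q) * Real.exp b))
    (h4 : t / (Real.exp (-n * Q) * Real.exp b) ≤ D) :
    |Real.log g - n * (P - Q) - b| ≤ Real.log C + Real.log D := by
  have ht : 0 < t := lt_of_lt_of_le (by positivity) h1
  rw [le_div_iff₀ (by positivity)] at h3
  rw [div_le_iff₀ (by positivity)] at h4
  have l1 := Real.log_le_log (by positivity) h1
  have l2 := Real.log_le_log ht h2
  have l3 := Real.log_le_log (by positivity) h3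
  have l4 := Real.log_le_log ht h4
  rw [Real.log_mul (by positivity) (by positivity), Real.log_mul (by positivity) (by positivity),
    Real.log_exp] at l1 l2 l3 l4
  rw [Real.log_inv] at l1 l3
  rw [Real.log_exp] at l3 l4
  rw [abs_le]; constructor <;> linarith

theorem aa_of_log (a b d K : ℝ) (ha : 0 < a) (hb : 0 < b) (hd : 0 < d)
    (h : |Real.log d - Real.log a - Real.log b| ≤ K) :
    Real.exp (-K) * (a * b) ≤ d ∧ d ≤ Real.exp K * (a * b) := by
  obtain ⟨h1, h2⟩ := abs_le.1 h
  have e : a * b = Real.exp (Real.log a + Real.log b) := by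
    rw [Real.exp_add, Real.exp_log ha, Real.exp_log hb]
  rw [e, ← Real.exp_add, ← Real.exp_add]
  constructor
  · refine (Real.exp_le_exp.2 ?_).trans (Real.exp_log hd).le
    linarith
  · refine (Real.exp_log hd).ge.trans (Real.exp_le_exp.2 ?_)
    linarith

/-- Theorem `phd1` (i) combined with (ii): under Setting (C), if
`M_{22}|_{π^{-1}(22)}` is not of the form `[[0,a₁],[a₂,0]]` with `a₁, a₂ > 0`, then `𝓖`
is almost additive iff `πμ` is the unique invariant Gibbs measure of some continuous
function `ĝ` on `Y`; and if `𝓖` is weakly almost additive then `πμ` is the unique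
invariant weak Gibbs measure of some continuous `ĝ`. (Symbols `1,2,3` of the paper are
`0,1,2` here, and symbols `1,2` of `Y` are `0,1`.) -/
theorem stmt_15
    (A : Fin 3 → Fin 3 → ℕ) (hA01 : ∀ i j, A i j = 0 ∨ A i j = 1)
    (X : Set (ℕ → Fin 3)) (hXdef : X = {x | ∀ n : ℕ, A (x n) (x (n + 1)) = 1})
    (hXirr : IrreducibleShift X)
    (Y : Set (ℕ → Fin 2))
    (hYdef : Y = Set.univ ∨ Y = {y | ∀ n : ℕ, ¬(y n = 0 ∧ y (n + 1) = 0)})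
    (hYirr : IrreducibleShift Y)
    (hsurj : (fun x => (projC (l := 3)) ∘ x) '' X = Y)
    (F : Fin 3 → Fin 3 → ℝ) (f : (ℕ → Fin 3) → ℝ)
    (hf : ∀ x : ℕ → Fin 3, f x = F (x 0) (x 1))
    (μ : Measure (ℕ → Fin 3)) (hμinv : IsInvariantOn μ X) (hμG : GibbsFun X f μ)
    (hMsub : ¬ ∃ a₁ a₂ : ℝ, 0 < a₁ ∧ 0 < a₂ ∧
      (Matrix.of fun i j : Fin 2 => MC A F i.succ j.succ) = !![(0 : ℝ), a₁; a₂, 0]) :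
    ((∃ C : ℝ, 0 < C ∧ AAOn Y (gseq X projC f) C) ↔
      (∃ ghat : (ℕ → Fin 2) → ℝ, ContinuousOn ghat Y ∧
        IsInvariantOn (μ.map (fun x => (projC (l := 3)) ∘ x)) Y ∧
        GibbsFun Y ghat (μ.map (fun x => (projC (l := 3)) ∘ x)) ∧
        ∀ ν : Measure (ℕ → Fin 2), IsInvariantOn ν Y → GibbsFun Y ghat ν →
          ν = μ.map (fun x => (projC (l := 3)) ∘ x))) ∧
    (WeakAAOn Y (gseq X projC f) →
      ∃ ghat : (ℕ → Fin 2) → ℝ, ContinuousOn ghat Y ∧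
        IsInvariantOn (μ.map (fun x => (projC (l := 3)) ∘ x)) Y ∧
        WeakGibbsFun Y ghat (μ.map (fun x => (projC (l := 3)) ∘ x)) ∧
        ∀ ν : Measure (ℕ → Fin 2), IsInvariantOn ν Y → WeakGibbsFun Y ghat ν →
          ν = μ.map (fun x => (projC (l := 3)) ∘ x)) := by
  have hXm : MeasurableSet X := by
    rw [hXdef]; exact meas_SFT (fun i j => A i j = 1)
  have hYm : MeasurableSet Y := by
    rcases hYdef with h | h
    · rw [h]; exact MeasurableSet.univ
    · rw [h]; exact meas_SFT (fun i j => ¬ (i = 0 ∧ j = 0))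
  have hYs : ∀ y ∈ Y, shift y ∈ Y := by
    intro y hy
    rcases hYdef with h | h
    · rw [h]; trivial
    · rw [h] at hy ⊢
      intro n
      exact hy (n+1)
  have hYn : ∀ j, ∀ y ∈ Y, shift^[j] y ∈ Y := by
    intro j
    induction j with
    | zero => intro y hy; exact hy
    | succ j ih => intro y hy; rw [Function.iterate_succ_apply]; exact ih _ (hYs y hy)
  have hXn : ∀ x ∈ X, ∀ n, shift^[n] x ∈ X := by
    intro x hx n
    rw [hXdef] at hx ⊢
    intro i
    rw [shift_iter, shift_iter]
    exact hx (n + i)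
  have hR : ∀ x, |f x| ≤ ∑ i, ∑ j, |F i j| := by
    intro x
    rw [hf]
    exact (Finset.single_le_sum (f := fun j => |F (x 0) j|) (fun j _ => abs_nonneg _)
      (Finset.mem_univ (x 1))).trans
      (Finset.single_le_sum (f := fun i => ∑ j, |F i j|)
        (fun i _ => Finset.sum_nonneg (fun j _ => abs_nonneg _)) (Finset.mem_univ (x 0)))
  have hpos : ∀ y ∈ Y, ∀ n, 0 < gseq X projC f n y := by
    intro y hy n
    rw [← hsurj] at hy
    obtain ⟨x, hx, rfl⟩ := hy
    exact gseq_pos X projC f _ hR n _ x hx (fun i => rfl)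
  have hE := ergodic_of_gibbs A X hXdef hXirr f _ hR μ hμinv hμG
  obtain ⟨iμ, hμX, hμi⟩ := hμinv
  obtain ⟨P, C, hC, hG⟩ := hμG
  have hpm : Measurable (fun x : ℕ → Fin 3 => (projC (l := 3)) ∘ x) :=
    measurable_pi_lambda _ (fun i => (measurable_of_finite _).comp (measurable_pi_apply i))
  have hpb := push_bounds X (projC (l := 3)) f _ hR hXm μ hμX P C hC hG
  set m := μ.map (fun x => (projC (l := 3)) ∘ x) with hmdef
  have im : IsProbabilityMeasure m := Measure.isProbabilityMeasure_map hpm.aemeasurable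
  have hmE : Ergodic shift m := by
    refine MeasurePreserving.ergodic_of_ergodic_semiconj (g := fun x => (projC (l := 3)) ∘ x)
      ⟨hpm, rfl⟩ hE measurable_shift' ?_
    intro x; rfl
  have hmY : m Y = 1 := by
    rw [hmdef, Measure.map_apply hpm hYm]
    refine le_antisymm prob_le_one ?_
    rw [← hμX]
    refine measure_mono (fun x hx => ?_)
    rw [← hsurj]
    exact ⟨x, hx, rfl⟩
  have hminv : IsInvariantOn m Y := ⟨im, hmY, fun B hB =>
    hmE.toMeasurePreserving.measure_preimage hB.nullMeasurableSet⟩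
  have hsub : ∀ n l, 1 ≤ n → 1 ≤ l → ∀ (u : Fin n → Fin 2) (v : Fin l → Fin 2),
      m.real (resn (n+l) ⁻¹' {Fin.append u v}) ≤
        (C * C * C) * (m.real (resn n ⁻¹' {u}) * m.real (resn l ⁻¹' {v})) := by
    intro n l hn hl u v
    by_cases hu : ∃ y ∈ Y, resn (n + l) y = Fin.append u v
    · obtain ⟨y, hy, hyu⟩ := hu
      have hmem : y ∈ resn (n + l) ⁻¹' {Fin.append u v} := hyu
      rw [append_pre] at hmem
      obtain ⟨hyu1, hyv⟩ := hmem
      have hyu1 : resn n y = u := hyu1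
      have hyv : resn l (shift^[n] y) = v := hyv
      rw [← hyu, ← hyu1, ← hyv]
      have b1 := (hpb (n + l) (by omega) y).2
      have b2 := (hpb n hn y).1
      have b3 := (hpb l hl (shift^[n] y)).1
      have b4 := gseq_submul X (projC (l := 3)) f _ hR hXn n l y
      rw [inv_mul_le_iff₀ hC] at b2 b3
      have p1 := hpos y hy n
      have p2 := hpos _ (hYn n y hy) l
      have b5 := mul_le_mul b2 b3 (by positivity) (by positivity)
      have e : Real.exp (-((n + l : ℕ) : ℝ) * P) =
          Real.exp (-(n:ℝ) * P) * Real.exp (-(l:ℝ) * P) := by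
        rw [← Real.exp_add]; congr 1; push_cast; ring
      rw [e] at b1
      have b6 := mul_le_mul_of_nonneg_left b4
        (show 0 ≤ C * (Real.exp (-(n:ℝ) * P) * Real.exp (-(l:ℝ) * P)) by positivity)
      have b7 := mul_le_mul_of_nonneg_left b5 hC.le
      linarith
    · have : m (resn (n + l) ⁻¹' {Fin.append u v}) = 0 := by
        refine measure_mono_null ?_ ((prob_compl_eq_zero_iff hYm).2 hmY)
        intro y hy hyY
        exact hu ⟨y, hyY, hy⟩
      rw [measureReal_def, this, ENNReal.toReal_zero]
      positivity
  have huniq : ∀ g : (ℕ → Fin 2) → ℝ, WeakGibbsFun Y g m → ∀ ν : Measure (ℕ → Fin 2),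
      IsInvariantOn ν Y → WeakGibbsFun Y g ν → ν = m := fun g hg ν hν hνg =>
    unique_weak Y hYm g ν m hν hminv hmE (C * C * C) (by positivity) hsub hg hνg
  obtain ⟨l, hl⟩ := lim_exists A X F hA01 hXdef hXirr Y hYdef hsurj hMsub
  have hbb := birk_bound A hA01 X hXdef F f hf l hl Y hYs hYdef hpos
  have hcont := (gh_cont _ l hl).continuousOn (s := Y)
  refine ⟨⟨?_, ?_⟩, ?_⟩
  · rintro ⟨c, hc, hAA⟩
    have hgib : GibbsFun Y (gh (MC A F) l) m := by
      refine ⟨P, C * Real.exp c, by positivity, fun y hy n hn => ?_⟩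
      rw [meas_cyl Y hYm m hmY, ← measureReal_def]
      exact gibbs_conv _ _ _ _ c C (Real.exp_pos _) (hpos y hy n) hC (hpb n hn y).1
        (hpb n hn y).2 (hbb n c (fun y hy k hk => hAA y hy n k hn hk) y hy)
    exact ⟨_, hcont, hminv, hgib, fun ν hν hνg =>
      huniq _ (weak_of_gibbs _ _ _ hgib) ν hν (weak_of_gibbs _ _ _ hνg)⟩
  · rintro ⟨g, _, _, ⟨Q, D, hD, hgD⟩, _⟩
    have key : ∀ y ∈ Y, ∀ n : ℕ, 1 ≤ n →
        |Real.log (gseq X projC f n y) - n * (P - Q) - birk g n y| ≤ Real.log C + Real.log D := by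
      intro y hy n hn
      obtain ⟨d1, d2⟩ := hgD y hy n hn
      rw [meas_cyl Y hYm m hmY, ← measureReal_def] at d1 d2
      exact gibbs_log _ P _ _ C D Q n (hpos y hy n) hC hD (hpb n hn y).1 (hpb n hn y).2 d1 d2
    refine ⟨|3 * (Real.log C + Real.log D)| + 1, by positivity, ?_⟩
    intro y hy n k hn hk
    refine aa_of_log _ _ _ _ (hpos y hy n) (hpos _ (hYn n y hy) k) (hpos y hy _) ?_
    have k1 := abs_le.1 (key y hy n hn)
    have k2 := abs_le.1 (key _ (hYn n y hy) k hk)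
    have k3 := abs_le.1 (key y hy (n + k) (by omega))
    rw [birk_add] at k3
    push_cast at k3
    have := le_abs_self (3 * (Real.log C + Real.log D))
    obtain ⟨k11, k12⟩ := k1
    obtain ⟨k21, k22⟩ := k2
    obtain ⟨k31, k32⟩ := k3
    rw [abs_le]; constructor <;> linarith
  · rintro ⟨c, hc, hcl, hAA⟩
    have hgib : WeakGibbsFun Y (gh (MC A F) l) m := by
      refine ⟨P, fun n => C * Real.exp (c n), fun n _ => by positivity, ?_, fun y hy n hn => ?_⟩
      · have h0 := (tendsto_const_div_atTop_nhds_zero_nat (Real.log C)).add hcl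
        rw [add_zero] at h0
        refine h0.congr (fun n => ?_)
        rw [Real.log_mul hC.ne' (Real.exp_pos _).ne', Real.log_exp, add_div]
      · rw [meas_cyl Y hYm m hmY, ← measureReal_def]
        exact gibbs_conv _ _ _ _ (c n) C (Real.exp_pos _) (hpos y hy n) hC (hpb n hn y).1
          (hpb n hn y).2 (hbb n (c n) (fun y hy k hk => hAA y hy n k hn hk) y hy)
    exact ⟨_, hcont, hminv, hgib, fun ν hν hνg => huniq _ hgib ν hν hνg⟩
end
end

section
/- Assume Setting (C) and suppose the sequence 𝓗 = {log h_n} is weakly almost additive on Y. If the 2×2 submatrix M_{22}|_{π^{-1}(22)} is not similar over ℝ to diag(α, −α) for any α ≠ 0, then the limits lim_{n→∞} h[2^{n+2}]/h[2^{n+1}] and lim_{n→∞} h[2^{n+2}1]/h[2^{n+1}1] both exist and are equal (so the function ĥ(y) = lim_n log(h_n(y)/h_{n-1}(σ_Y y)) is continuous at the point 2^∞ ∈ Y). -/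
open MeasureTheory Filter Topology

noncomputable section

open scoped Classical

theorem aux_seq (a b c d : ℝ) (ha : 0 ≤ a) (hb : 0 ≤ b) (hc : 0 ≤ c) (hd : 0 ≤ d)
    (had : 0 < a + d) (p q : ℕ → ℝ) (hp : ∀ n, p (n+1) = a * p n + b * q n)
    (hq : ∀ n, q (n+1) = c * p n + d * q n) (hp0 : 0 ≤ p 0) (hq0 : 0 ≤ q 0)
    (hpq : 0 < p 0 + q 0) (H1 : 0 < p 0 ∨ 0 < b ∨ a = 0) (H2 : 0 < q 0 ∨ 0 < c ∨ d = 0) :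
    Tendsto (fun n => (p (n+1) + q (n+1)) / (p n + q n)) atTop
      (𝓝 ((a + d + √((a-d)^2 + 4*b*c))/2)) := by
  have hbc : 0 ≤ b * c := mul_nonneg hb hc
  have hD : 0 ≤ (a-d)^2 + 4*b*c := by nlinarith [sq_nonneg (a-d)]
  have hR2 := Real.sq_sqrt hD
  have hR0 := Real.sqrt_nonneg ((a-d)^2 + 4*b*c)
  set R := √((a-d)^2 + 4*b*c) with hR
  obtain ⟨l, hl⟩ : ∃ l, l = (a + d + R)/2 := ⟨_, rfl⟩
  obtain ⟨m, hm⟩ : ∃ m, m = (a + d - R)/2 := ⟨_, rfl⟩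
  rw [← hl]
  have hsum : l + m = a + d := by rw [hl, hm]; ring
  have hprod : l * m = a * d - b * c := by rw [hl, hm]; nlinarith
  have hlpos : 0 < l := by rw [hl]; linarith
  obtain ⟨s, hs⟩ : ∃ s : ℕ → ℝ, ∀ n, s n = p n + q n := ⟨_, fun _ => rfl⟩
  simp only [← hs]
  have hrec : ∀ n, s (n+2) = (l + m) * s (n+1) - (l * m) * s n := by
    intro n
    rw [hsum, hprod, hs, hs, hs, hp (n+1), hq (n+1), hp n, hq n]; ring
  have hs0 : 0 < s 0 := by rw [hs]; exact hpq
  have hs1 : s 1 = (a + c) * p 0 + (b + d) * q 0 := by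
    rw [hs, hp 0, hq 0]; ring
  have hRabs : |a - d| ≤ R := by
    apply Real.le_sqrt_of_sq_le
    rw [sq_abs]; nlinarith
  have hma : m ≤ a := by have := neg_abs_le (a-d); rw [hm]; linarith
  have hmd : m ≤ d := by have := le_abs_self (a-d); rw [hm]; linarith
  have hquad : (a - m) * (d - m) = b * c := by
    have : m * m = (l+m) * m - l * m := by ring
    rw [hsum, hprod] at this
    linarith
  rcases eq_or_lt_of_le hR0 with hz | hpos
  · -- double root
    have hml : m = l := by rw [hl, hm, ← hz]; ring
    have h0 : (a-d)^2 + 4*b*c = 0 := by rw [← hR2, ← hz]; ring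
    have hadeq : a = d := by nlinarith [sq_nonneg (a-d)]
    have hla : l = a := by rw [hl, ← hz]; linarith
    obtain ⟨k, hk⟩ : ∃ k, k = s 1 / l - s 0 := ⟨_, rfl⟩
    have hk0 : 0 ≤ k := by
      rw [hk, sub_nonneg, le_div_iff₀ hlpos, hs1, hs 0, hla]
      nlinarith [mul_nonneg hc hp0, mul_nonneg hb hq0]
    have hform : ∀ n : ℕ, s n = l^n * (s 0 + n * k) ∧ s (n+1) = l^(n+1) * (s 0 + (n+1) * k) := by
      intro n
      induction n with
      | zero =>
        refine ⟨by simp, ?_⟩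
        rw [hk]; field_simp; push_cast; ring
      | succ n ih =>
        refine ⟨by rw [ih.2]; push_cast; ring, ?_⟩
        rw [hrec, ih.1, ih.2, hml]; push_cast; ring
    have hpos' : ∀ n : ℕ, 0 < s 0 + n * k := fun n => by positivity
    have hratio : ∀ n : ℕ, s (n+1) / s n = l * (1 + k / (s 0 + n * k)) := by
      intro n
      have := hpos' n
      rw [(hform n).1, (hform n).2]
      have := pow_pos hlpos n
      field_simp; ring
    simp only [hratio]
    have : Tendsto (fun n : ℕ => k / (s 0 + n * k)) atTop (𝓝 0) := by
      rcases eq_or_lt_of_le hk0 with h | h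
      · simp [← h]
      · apply Tendsto.div_atTop tendsto_const_nhds
        apply tendsto_atTop_add_const_left
        exact tendsto_natCast_atTop_atTop.atTop_mul_const h
    simpa using (this.const_add 1).const_mul l
  · have hlm : m < l := by rw [hl, hm]; linarith
    obtain ⟨P, hP⟩ : ∃ P, P = s 1 - m * s 0 := ⟨_, rfl⟩
    obtain ⟨Q, hQ⟩ : ∃ Q, Q = s 1 - l * s 0 := ⟨_, rfl⟩
    have hPf : P = (a - m + c) * p 0 + (b + (d - m)) * q 0 := by rw [hP, hs1, hs 0]; ring
    have hma' : 0 ≤ a - m := by linarith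
    have hmd' : 0 ≤ d - m := by linarith
    have hPne : P ≠ 0 := by
      intro h
      rw [hPf] at h
      have e1 : (a - m + c) * p 0 = 0 := by
        have := mul_nonneg (add_nonneg hma' hc) hp0
        have := mul_nonneg (add_nonneg hb hmd') hq0
        linarith
      have e2 : (b + (d - m)) * q 0 = 0 := by linarith
      rcases mul_eq_zero.1 e1 with f1 | f1 <;> rcases mul_eq_zero.1 e2 with f2 | f2
      · linarith
      · have : c = 0 := by linarith
        rcases H2 with h | h | h
        · linarith
        · linarith
        · linarith
      · rcases H1 with h | h | h
        · linarith
        · linarith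
        · linarith
      · linarith
    have hform : ∀ n, s (n+1) - m * s n = l^n * P ∧ s (n+1) - l * s n = m^n * Q := by
      intro n
      induction n with
      | zero => simp [hP, hQ]
      | succ n ih =>
        constructor
        · rw [hrec, show l^(n+1) * P = l * (l^n * P) by ring, ← ih.1]; ring
        · rw [hrec, show m^(n+1) * Q = m * (m^n * Q) by ring, ← ih.2]; ring
    have hlm' : l - m ≠ 0 := by linarith
    have hln : ∀ n, l^n ≠ 0 := fun n => (pow_pos hlpos n).ne'
    have hsn : ∀ n, s n = l^n * ((P - Q * (m/l)^n) / (l - m)) := by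
      intro n
      have := hln n
      rw [div_pow]; field_simp
      linarith [(hform n).1, (hform n).2]
    have hr : |m / l| < 1 := by
      rw [abs_div, abs_of_pos hlpos, div_lt_one hlpos, abs_lt]
      constructor <;> linarith
    have ht := tendsto_pow_atTop_nhds_zero_of_abs_lt_one hr
    have hratio : ∀ n, s (n+1) / s n = l * ((P - Q * (m/l)^(n+1)) / (P - Q * (m/l)^n)) := by
      intro n
      rw [hsn n, hsn (n+1), pow_succ l, mul_assoc, mul_div_mul_left _ _ (hln n), mul_div_assoc,
        div_div_div_cancel_right₀ hlm']
    simp only [hratio]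
    have t0 : Tendsto (fun n => P - Q * (m/l)^n) atTop (𝓝 P) := by
      simpa using (ht.const_mul Q).const_sub P
    have t1 : Tendsto (fun n => P - Q * (m/l)^(n+1)) atTop (𝓝 P) :=
      (tendsto_add_atTop_iff_nat (f := fun n => P - Q * (m/l)^n) 1).2 t0
    have := (t1.div t0 hPne).const_mul l
    rwa [div_self hPne, mul_one] at this

/-- transfer weights -/
def auxG (N : Fin 3 → Fin 3 → ℝ) : ℕ → (ℕ → Fin 2) → Fin 3 → ℝ
  | 0, _, _ => 1
  | n+1, y, i => ∑ j : Fin 3, if projC j = y 0 then N i j * auxG N n (fun k => y (k+1)) j else 0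

theorem auxG_eq (N : Fin 3 → Fin 3 → ℝ) (n : ℕ) : ∀ (y : ℕ → Fin 2) (i : Fin 3),
    auxG N n y i = ∑ u : Fin n → Fin 3, if (∀ k : Fin n, projC (u k) = y k) then
      ∏ k : Fin n, N ((Fin.cons i u : Fin (n+1) → Fin 3) k.castSucc) (u k) else 0 := by
  induction n with
  | zero => intro y i; simp [auxG]
  | succ n ih =>
    intro y i
    rw [auxG, ← (Fin.consEquiv (fun _ => Fin 3)).sum_comp, Fintype.sum_prod_type]
    refine Finset.sum_congr rfl fun j _ => ?_
    simp only [Fin.consEquiv, Equiv.coe_fn_mk, Fin.forall_fin_succ, Fin.cons_zero, Fin.cons_succ,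
      Fin.prod_univ_succ, Fin.castSucc_zero, Fin.val_zero, Fin.val_succ]
    split_ifs with h
    · simp only [h, true_and]
      rw [ih, Finset.mul_sum]
      refine Finset.sum_congr rfl fun u _ => ?_
      split_ifs with h2
      · congr 1
      · simp
    · simp [h]

theorem aux_h (A : Fin 3 → Fin 3 → ℕ) 
    (X : Set (ℕ → Fin 3)) (hXdef : X = {x | ∀ n : ℕ, A (x n) (x (n + 1)) = 1})
    (F : Fin 3 → Fin 3 → ℝ) (f : (ℕ → Fin 3) → ℝ) (N : Fin 3 → Fin 3 → ℝ)
    (hN : ∀ i j, N i j = if (∃ x ∈ X, x 0 = i ∧ x 1 = j) then Real.exp (F i j) else 0)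
    (n : ℕ) (y : ℕ → Fin 2) :
    hseqC X projC F f (n+2) y =
      ∑ i : Fin 3, if projC i = y 0 then auxG N (n+1) (fun k => y (k+1)) i else 0 := by
  have hshift : ∀ x ∈ X, ∀ m, (fun k => x (m + k)) ∈ X := by
    intro x hx m
    rw [hXdef] at hx ⊢
    intro k
    exact hx (m+k)
  have key : ∀ u : Fin (n+2) → Fin 3, (∃ x ∈ X, ∀ i : Fin (n+2), x ↑i = u i) ↔
      ∀ i : Fin (n+1), ∃ x ∈ X, x 0 = u i.castSucc ∧ x 1 = u i.succ := by
    intro u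
    constructor
    · rintro ⟨x, hx, h⟩ i
      refine ⟨_, hshift x hx i, ?_, ?_⟩
      · rw [← h]; simp
      · rw [← h]; simp
    · intro h
      obtain ⟨x, hx, h0, h1⟩ := h (Fin.last n)
      refine ⟨fun k => if hk : k < n + 2 then u ⟨k, hk⟩ else x (k - n), ?_, ?_⟩
      · rw [hXdef] at hx ⊢
        intro k
        rcases lt_trichotomy k (n+1) with hk | hk | hk
        · obtain ⟨z, hz, z0, z1⟩ := h ⟨k, hk⟩
          rw [hXdef] at hz
          have := hz 0
          simp only [z0, z1, zero_add] at this
          have e1 : k < n + 2 := by omega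
          have e2 : k + 1 < n + 2 := by omega
          simpa [e1, e2] using this
        · subst hk
          have := hx 1
          rw [h1] at this
          simp only [Fin.succ_last] at this
          simp only [Nat.lt_add_one, dite_true, lt_self_iff_false,
            add_assoc, Nat.reduceAdd, dite_false, Nat.add_sub_cancel_left]
          exact this
        · have e1 : ¬ k < n + 2 := by omega
          have e2 : ¬ k + 1 < n + 2 := by omega
          simp only [e1, e2, dite_false]
          have := hx (k - n)
          rwa [show k - n + 1 = k + 1 - n by omega] at this
      · intro i; simp
  rw [hseqC, if_neg (by omega), ← (Fin.consEquiv (fun _ => Fin 3)).sum_comp, Fintype.sum_prod_type]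
  refine Finset.sum_congr rfl fun i _ => ?_
  rw [auxG_eq]
  split_ifs with hi
  · refine Finset.sum_congr rfl fun u _ => ?_
    have e : (∀ k : Fin (n+2), projC ((Fin.cons i u : Fin (n+2) → Fin 3) k) = y k) ↔
        ∀ k : Fin (n+1), projC (u k) = y (k+1) := by
      rw [Fin.forall_fin_succ]; simp [hi]
    refine (if_congr (and_congr (key _) e) rfl rfl).trans ?_
    simp only [Fin.consEquiv, Equiv.coe_fn_mk]
    by_cases h2 : ∀ k : Fin (n+1), projC (u k) = y (k+1)
    · rw [if_pos h2]
      simp only [h2, implies_true, and_true, Fin.cons_succ]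
      split_ifs with h3
      · rw [Fin.sum_univ_castSucc, Real.exp_add, Real.exp_sum]
        simp only [Fin.val_last, lt_self_iff_false, dite_false, Real.exp_zero, mul_one]
        refine Finset.prod_congr rfl fun k _ => ?_
        rw [hN, if_pos (h3 k), dif_pos (by simp; omega)]
        congr 2
      · push Not at h3
        obtain ⟨k, hk⟩ := h3
        symm
        apply Finset.prod_eq_zero (Finset.mem_univ k)
        rw [hN, if_neg]
        rintro ⟨x, hx, h⟩
        exact hk x hx h.1 h.2
    · rw [if_neg h2]
      exact if_neg (fun h => h2 h.2)
  · apply Finset.sum_eq_zero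
    intro u _
    rw [if_neg]
    rintro ⟨_, h⟩
    exact hi (by simpa [Fin.consEquiv] using h 0)

/-- Lemma `conti2`: under Setting (C), if `𝓗 = {log h_n}` is weakly
almost additive and `M_{22}|_{π^{-1}(22)}` is not similar over `ℝ` to `diag(α, −α)` for
any `α ≠ 0`, then `lim h[2^{n+2}]/h[2^{n+1}]` and `lim h[2^{n+2}1]/h[2^{n+1}1]` both
exist and are equal (continuity of `ĥ` at `2^∞`). (Symbols `1,2,3` of the paper are
`0,1,2` here, and symbols `1,2` of `Y` are `0,1`.) -/
theorem stmt_17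
    (A : Fin 3 → Fin 3 → ℕ) (hA01 : ∀ i j, A i j = 0 ∨ A i j = 1)
    (X : Set (ℕ → Fin 3)) (hXdef : X = {x | ∀ n : ℕ, A (x n) (x (n + 1)) = 1})
    (hXirr : IrreducibleShift X)
    (Y : Set (ℕ → Fin 2))
    (hYdef : Y = Set.univ ∨ Y = {y | ∀ n : ℕ, ¬(y n = 0 ∧ y (n + 1) = 0)})
    (hYirr : IrreducibleShift Y)
    (hsurj : (fun x => (projC (l := 3)) ∘ x) '' X = Y)
    (F : Fin 3 → Fin 3 → ℝ) (f : (ℕ → Fin 3) → ℝ)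
    (hf : ∀ x : ℕ → Fin 3, f x = F (x 0) (x 1))
    (hWAA : WeakAAOn Y (hseqC X projC F f))
    (hnsim : ∀ α : ℝ, α ≠ 0 →
      ¬ Similar2 (Matrix.of fun i j : Fin 2 => MC A F i.succ j.succ) !![α, 0; 0, -α]) :
    ∃ L : ℝ,
      Tendsto (fun n : ℕ =>
          hseqC X projC F f (n + 3) (fun _ => 1) /
            hseqC X projC F f (n + 2) (fun _ => 1)) atTop (𝓝 L) ∧
      Tendsto (fun n : ℕ =>
          hseqC X projC F f (n + 3) (fun i => if i < n + 2 then 1 else 0) /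
            hseqC X projC F f (n + 2) (fun i => if i < n + 1 then 1 else 0)) atTop
        (𝓝 L) := by
  obtain ⟨N, hN⟩ : ∃ N : Fin 3 → Fin 3 → ℝ, ∀ i j, N i j =
      if (∃ x ∈ X, x 0 = i ∧ x 1 = j) then Real.exp (F i j) else 0 := ⟨_, fun _ _ => rfl⟩
  have hh := aux_h A X hXdef F f N hN
  have hY : ∀ y : ℕ → Fin 2, (∀ n : ℕ, ¬(y n = 0 ∧ y (n + 1) = 0)) → y ∈ Y := by
    intro y hy
    rcases hYdef with h | h <;> rw [h]
    · trivial
    · exact hy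
  have hshift : ∀ x ∈ X, ∀ m, (fun k => x (m + k)) ∈ X := by
    intro x hx m
    rw [hXdef] at hx ⊢
    intro k
    exact hx (m+k)
  have hNpos : ∀ x ∈ X, ∀ m, 0 < N (x m) (x (m+1)) := by
    intro x hx m
    rw [hN, if_pos ⟨_, hshift x hx m, rfl, rfl⟩]
    exact Real.exp_pos _
  have hN0 : ∀ i j, 0 ≤ N i j := by
    intro i j; rw [hN]; split_ifs
    · exact (Real.exp_pos _).le
    · exact le_rfl
  have hNex : ∀ i j, N i j ≠ 0 → ∃ x ∈ X, x 0 = i ∧ x 1 = j := by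
    intro i j h
    by_contra h'
    exact h (by rw [hN, if_neg h'])
  have hproj : ∀ i : Fin 3, projC i = 1 → i = 1 ∨ i = 2 := by
    intro i; fin_cases i <;> simp [projC]
  have hproj0 : ∀ i : Fin 3, projC i = 0 → i = 0 := by
    intro i; fin_cases i <;> simp [projC]
  -- exit from 1 or 2
  obtain ⟨x0, hx0, hx00⟩ : ∃ x ∈ X, x 0 = 0 := by
    have : (fun k : ℕ => if k = 0 then (0 : Fin 2) else 1) ∈ Y := by
      apply hY; intro n; simp
    rw [← hsurj] at this
    obtain ⟨x, hx, h⟩ := this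
    exact ⟨x, hx, hproj0 _ (by simpa using congrFun h 0)⟩
  have hexit : ∀ i j : Fin 3, i ≠ 0 → (∀ k, k ≠ i → k ≠ j → k = 0) → 
      0 < N i 0 ∨ 0 < N i j ∨ N i i = 0 := by
    intro i j hi hij
    by_contra hcon
    push Not at hcon
    obtain ⟨h1, h2, h3⟩ := hcon
    obtain ⟨x, hx, hxi, -⟩ := hNex _ _ h3
    obtain ⟨w, z, hz, m, hw⟩ := hXirr [i] [0] ⟨x, hx, 0, by simpa using hxi⟩
      ⟨x0, hx0, 0, by simpa using hx00⟩
    have hz0 : z m = i := by simpa using hw ⟨0, by simp⟩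
    have hz1 : z (m + (w.length + 1)) = 0 := by
      have := hw ⟨w.length + 1, by simp⟩
      simpa using this
    have hall : ∀ k, z (m + k) = i := by
      intro k
      induction k with
      | zero => exact hz0
      | succ k ih =>
        by_contra hne
        have hp := hNpos z hz (m+k)
        rw [ih] at hp
        by_cases hj : z (m+k+1) = j
        · rw [hj] at hp; linarith
        · have := hij _ hne hj
          rw [add_assoc, this] at hp; linarith
    exact hi ((hall _).symm.trans hz1)
  obtain ⟨x1, hx1, hx1p⟩ : ∃ x ∈ X, ∀ k, x k = 1 ∨ x k = 2 := by
    have : (fun _ : ℕ => (1 : Fin 2)) ∈ Y := by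
      apply hY; intro n; simp
    rw [← hsurj] at this
    obtain ⟨x, hx, h⟩ := this
    exact ⟨x, hx, fun k => hproj _ (by simpa using congrFun h k)⟩
  have hv : 0 < N 1 0 + N 2 0 := by
    have : (fun k : ℕ => if k = 1 then (0 : Fin 2) else 1) ∈ Y := by
      apply hY; intro n; simp; omega
    rw [← hsurj] at this
    obtain ⟨x, hx, h⟩ := this
    have e1 : x 1 = 0 := hproj0 _ (by simpa using congrFun h 1)
    have hp := hNpos x hx 0
    rw [zero_add, e1] at hp
    rcases hproj (x 0) (by simpa using congrFun h 0) with e | e <;> rw [e] at hp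
    · linarith [hN0 2 0]
    · linarith [hN0 1 0]
  have ht : 0 < N 1 1 + N 2 2 := by
    by_contra hcon
    have ea : N 1 1 = 0 := by linarith [hN0 1 1, hN0 2 2]
    have ed : N 2 2 = 0 := by linarith [hN0 1 1, hN0 2 2]
    have hbc : 0 < N 1 2 ∧ 0 < N 2 1 := by
      have p0 := hNpos x1 hx1 0
      have p1 := hNpos x1 hx1 1
      rcases hx1p 0 with e0 | e0 <;> rcases hx1p 1 with e1 | e1 <;> rcases hx1p 2 with e2 | e2 <;>
        simp only [e0, e1, e2, zero_add, Nat.reduceAdd, ea, ed, lt_self_iff_false] at p0 p1 <;>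
        exact ⟨by assumption, by assumption⟩
    obtain ⟨u, hu, u0, u1⟩ := hNex 1 2 hbc.1.ne'
    obtain ⟨w, hw, w0, w1⟩ := hNex 2 1 hbc.2.ne'
    have hloop : ∀ i, N i i = 0 → (∃ z ∈ X, z 0 = i) → A i i = 0 := by
      rintro i hi ⟨z, hz, z0⟩
      rcases hA01 i i with h | h
      · exact h
      · exfalso
        have : (fun k : ℕ => if k = 0 then i else z (k-1)) ∈ X := by
          rw [hXdef] at hz ⊢
          intro n
          rcases n with _ | n
          · simpa [z0] using h
          · simpa using hz n
        have := hNpos _ this 0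
        simp [z0, hi] at this
    have hA1 := hloop 1 ea ⟨u, hu, u0⟩
    have hA2 := hloop 2 ed ⟨w, hw, w0⟩
    have hA12 : A 1 2 = 1 := by rw [hXdef] at hu; simpa [u0, u1] using hu 0
    have hA21 : A 2 1 = 1 := by rw [hXdef] at hw; simpa [w0, w1] using hw 0
    obtain ⟨b, hb⟩ : ∃ b, b = Real.exp (F 1 2 / 2) := ⟨_, rfl⟩
    obtain ⟨c, hc⟩ : ∃ c, c = Real.exp (F 2 1 / 2) := ⟨_, rfl⟩
    have hb0 : 0 < b := hb ▸ Real.exp_pos _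
    have hc0 : 0 < c := hc ▸ Real.exp_pos _
    have hb2 : Real.exp (F 1 2) = b * b := by rw [hb, ← Real.exp_add]; ring_nf
    have hc2 : Real.exp (F 2 1) = c * c := by rw [hc, ← Real.exp_add]; ring_nf
    apply hnsim (b * c) (by positivity)
    have hdet : IsUnit (!![b, b; c, -c] : Matrix (Fin 2) (Fin 2) ℝ).det := by
      rw [Matrix.det_fin_two_of, isUnit_iff_ne_zero]
      have : 0 < b * c := by positivity
      intro h; linarith
    refine ⟨!![b, b; c, -c], hdet, ?_⟩
    have hM : (Matrix.of fun i j : Fin 2 => MC A F i.succ j.succ) * !![b, b; c, -c] =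
        !![b, b; c, -c] * !![b*c, 0; 0, -(b*c)] := by
      ext i j
      fin_cases i <;> fin_cases j <;>
        simp [Matrix.mul_apply, Fin.sum_univ_two, MC, hA1, hA2, hA12, hA21, hb2, hc2] <;> ring
    rw [mul_assoc, hM, ← mul_assoc, Matrix.nonsing_inv_mul _ hdet, one_mul]
  have step : ∀ n (y : ℕ → Fin 2) i, y 0 = 1 → auxG N (n+1) y i =
      N i 1 * auxG N n (fun k => y (k+1)) 1 + N i 2 * auxG N n (fun k => y (k+1)) 2 := by
    intro n y i hy
    simp [auxG, hy, Fin.sum_univ_three, projC]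
  have hh' : ∀ n (y : ℕ → Fin 2), y 0 = 1 → hseqC X projC F f (n+2) y =
      auxG N (n+1) (fun k => y (k+1)) 1 + auxG N (n+1) (fun k => y (k+1)) 2 := by
    intro n y hy
    rw [hh]
    simp [hy, Fin.sum_univ_three, projC]
  have E1 := hexit 1 2 (by decide) (by decide)
  have E2 := hexit 2 1 (by decide) (by decide)
  refine ⟨(N 1 1 + N 2 2 + √((N 1 1 - N 2 2)^2 + 4 * N 1 2 * N 2 1))/2, ?_, ?_⟩
  rotate_left
  · have := aux_seq (N 1 1) (N 1 2) (N 2 1) (N 2 2) (hN0 _ _) (hN0 _ _) (hN0 _ _) (hN0 _ _) ht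
      (fun n => auxG N (n+1) (fun k => if k < n then 1 else 0) 1)
      (fun n => auxG N (n+1) (fun k => if k < n then 1 else 0) 2)
      (fun n => by rw [step (n+1) _ _ (by simp)]; simp)
      (fun n => by rw [step (n+1) _ _ (by simp)]; simp)
      (by simpa [auxG, Fin.sum_univ_three, projC] using hN0 1 0)
      (by simpa [auxG, Fin.sum_univ_three, projC] using hN0 2 0)
      (by simpa [auxG, Fin.sum_univ_three, projC] using hv)
      (by simpa [auxG, Fin.sum_univ_three, projC] using E1)
      (by simpa [auxG, Fin.sum_univ_three, projC] using E2)
    refine this.congr fun n => ?_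
    rw [hh' (n+1) _ (by simp), hh' n _ (by simp)]
    simp
  · have := aux_seq (N 1 1) (N 1 2) (N 2 1) (N 2 2) (hN0 _ _) (hN0 _ _) (hN0 _ _) (hN0 _ _) ht
      (fun n => auxG N n (fun _ => 1) 1)
      (fun n => auxG N n (fun _ => 1) 2)
      (fun n => by rw [step n _ _ rfl])
      (fun n => by rw [step n _ _ rfl])
      (by simp [auxG]) (by simp [auxG]) (by simp [auxG]) (by simp [auxG]) (by simp [auxG])
    refine ((tendsto_add_atTop_iff_nat 1).2 this).congr fun n => ?_
    rw [hh' (n+1) _ rfl, hh' n _ rfl]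
end
end
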